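/- arXiv:1212.1392 — 4 statements merged into one kernel-verified Lean document; each statement's English description precedes it below -/
import Mathlib

section
/- Let p be a prime number greater than 3. Then p divides neither the class number h(ℚ(√(1 − p))) nor the class number h(ℚ(√(4 − p))). -/
section ImaginaryQuadratic

open Complex

/-- A purely imaginary square root of a negative integer. -/
lemma re_eq_zero_and_im_sq_of_sq_eq_neg {n : ℕ} (hn : 0 < n) {z : ℂ} (hz : z ^ 2 = -(n : ℂ)) :
    z.re = 0 ∧ z.im ^ 2 = n := by
  have hre := congrArg Complex.re hz
  have him := congrArg Complex.im hz
  simp only [pow_two, mul_re, mul_im, neg_re, neg_im, natCast_re, natCast_im] at hre him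
  have hn' : (0 : ℝ) < n := by exact_mod_cast hn
  have h0 : z.re * z.im = 0 := by linarith
  rcases mul_eq_zero.1 h0 with h | h
  · refine ⟨h, ?_⟩
    rw [h] at hre
    linarith
  · rw [h] at hre
    nlinarith [mul_self_nonneg z.re]

/-- An additive subgroup of `ℂ` containing `1` as a shortest nonzero vector meets the real line
in the integers. -/
lemma exists_int_of_im_eq_zero {L : AddSubgroup ℂ} (h1 : (1 : ℂ) ∈ L)
    (hmin : ∀ x ∈ L, x ≠ 0 → 1 ≤ normSq x) {x : ℂ} (hx : x ∈ L) (him : x.im = 0) :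
    ∃ k : ℤ, x = k := by
  refine ⟨⌊x.re⌋, ?_⟩
  by_contra hne
  have hmem : x - (⌊x.re⌋ : ℂ) ∈ L := L.sub_mem hx (by simpa using L.zsmul_mem h1 ⌊x.re⌋)
  have h := hmin _ hmem (sub_ne_zero.2 hne)
  simp only [normSq_apply, sub_re, sub_im, intCast_re, intCast_im, him] at h
  nlinarith [Int.floor_le x.re, Int.lt_floor_add_one x.re]

/-- An additive subgroup of `ℂ` containing `1` as a shortest nonzero vector has its non-real
vectors outside the strip `|Im| < √3 / 2`. -/
lemma three_le_four_mul_im_sq {L : AddSubgroup ℂ} (h1 : (1 : ℂ) ∈ L)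
    (hmin : ∀ x ∈ L, x ≠ 0 → 1 ≤ normSq x) {x : ℂ} (hx : x ∈ L) (him : x.im ≠ 0) :
    3 ≤ 4 * x.im ^ 2 := by
  have hmem : x - (round x.re : ℂ) ∈ L := L.sub_mem hx (by simpa using L.zsmul_mem h1 (round x.re))
  have hne : x - (round x.re : ℂ) ≠ 0 := fun h => him (by simpa using congrArg Complex.im h)
  have h := hmin _ hmem hne
  simp only [normSq_apply, sub_re, sub_im, intCast_re, intCast_im, sub_zero] at h
  have hr := abs_le.1 (abs_sub_round x.re)
  nlinarith

/-- Reduction theory: a lattice containing `√(-n)`, and `1` as a shortest nonzero vector, has a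
basis `1, (√(-n) + b) / a` with `0 ≤ b < a ≤ √(4n/3)`. -/
lemma exists_reduced_basis {n : ℕ} (hn : 0 < n) {z : ℂ} (hz : z ^ 2 = -(n : ℂ))
    {L : AddSubgroup ℂ} (h1 : (1 : ℂ) ∈ L) (hzL : z ∈ L)
    (hmin : ∀ x ∈ L, x ≠ 0 → 1 ≤ normSq x) :
    ∃ a b : ℕ, b < a ∧ 3 * a ^ 2 ≤ 4 * n ∧
      ∀ x : ℂ, x ∈ L ↔ ∃ u v : ℤ, x = u + v * ((z + b) / a) := by
  obtain ⟨-, him⟩ := re_eq_zero_and_im_sq_of_sq_eq_neg hn hz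
  have hn' : (0 : ℝ) < n := by exact_mod_cast hn
  have him0 : z.im ≠ 0 := by
    intro h
    rw [h] at him
    simp at him
    linarith
  obtain ⟨g, hg⟩ : ∃ g, L.map imAddGroupHom = AddSubgroup.closure {g} := by
    refine AddSubgroup.cyclic_of_isolated_zero (a := 1 / 2) (by norm_num) ?_
    rw [Set.disjoint_left]
    rintro _ ⟨x, hx, rfl⟩ ⟨hpos, hlt⟩
    change 0 < x.im at hpos
    change x.im < 1 / 2 at hlt
    have := three_le_four_mul_im_sq h1 hmin hx hpos.ne'
    nlinarith
  have hmemg : ∀ x ∈ L, ∃ k : ℤ, x.im = k * g := by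
    intro x hx
    have : x.im ∈ L.map imAddGroupHom := ⟨x, hx, rfl⟩
    rw [hg, AddSubgroup.mem_closure_singleton] at this
    obtain ⟨k, hk⟩ := this
    exact ⟨k, by simpa using hk.symm⟩
  obtain ⟨y, hy, hyg⟩ : g ∈ L.map imAddGroupHom := by
    rw [hg]
    exact AddSubgroup.subset_closure rfl
  change y.im = g at hyg
  obtain ⟨a, t, ht, htim, htg⟩ : ∃ a : ℕ, ∃ t ∈ L, z.im = a * t.im ∧
      ∀ x ∈ L, ∃ v : ℤ, x.im = v * t.im := by
    obtain ⟨k, hk⟩ := hmemg z hzL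
    obtain ⟨a, rfl | rfl⟩ := k.eq_nat_or_neg
    · exact ⟨a, y, hy, by simpa [hyg] using hk, by simpa only [hyg] using hmemg⟩
    · refine ⟨a, -y, L.neg_mem hy, by simpa [hyg] using hk, fun x hx => ?_⟩
      obtain ⟨l, hl⟩ := hmemg x hx
      exact ⟨-l, by simpa [hyg] using hl⟩
  have ha0 : 0 < a := by
    refine Nat.pos_of_ne_zero ?_
    rintro rfl
    simp [him0] at htim
  have haC : (a : ℂ) ≠ 0 := by exact_mod_cast ha0.ne'
  obtain ⟨c, hc⟩ := exists_int_of_im_eq_zero h1 hmin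
    (L.sub_mem (L.nsmul_mem ht a) hzL) (by simp [htim])
  have htc : a * t = z + c := by
    rw [nsmul_eq_mul] at hc
    linear_combination hc
  have hb0 : 0 ≤ c % a := Int.emod_nonneg _ (by exact_mod_cast ha0.ne')
  have hblt : c % a < a := Int.emod_lt_of_pos _ (by exact_mod_cast ha0)
  obtain ⟨b, hb⟩ := Int.eq_ofNat_of_zero_le hb0
  have hcb : (c : ℂ) = b + a * (c / a : ℤ) := by
    have := Int.emod_add_mul_ediv c a
    rw [hb] at this
    exact_mod_cast this.symm
  have htau : (z + b) / a = t - (c / a : ℤ) := by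
    rw [div_eq_iff haC]
    linear_combination -htc - hcb
  have htauL : (z + b) / a ∈ L := by
    rw [htau]
    exact L.sub_mem ht (by simpa using L.zsmul_mem h1 (c / a))
  have htauim : ((z + b) / a).im = t.im := by
    rw [htau, sub_im, intCast_im, sub_zero]
  refine ⟨a, b, by omega, ?_, fun x => ⟨fun hx => ?_, ?_⟩⟩
  · have ht0 : t.im ≠ 0 := by
      intro h
      exact him0 (by rw [htim, h, mul_zero])
    have h3 := three_le_four_mul_im_sq h1 hmin ht ht0
    have : (3 : ℝ) * a ^ 2 ≤ 4 * n := by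
      rw [← him, htim]
      nlinarith [sq_nonneg (a : ℝ)]
    exact_mod_cast this
  · obtain ⟨v, hv⟩ := htg x hx
    have hvL : (v : ℂ) * ((z + b) / a) ∈ L := by simpa using L.zsmul_mem htauL v
    obtain ⟨u, hu⟩ := exists_int_of_im_eq_zero h1 hmin (L.sub_mem hx hvL) (by
      rw [sub_im, ← ofReal_intCast, im_ofReal_mul, htauim, hv, sub_self])
    exact ⟨u, v, by rw [← hu]; ring⟩
  · rintro ⟨u, v, rfl⟩
    exact L.add_mem (by simpa using L.zsmul_mem h1 u) (by simpa using L.zsmul_mem htauL v)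

/-- The pairs `(a, b)` which index reduced lattices containing `√(-n)`. -/
def reducedPairs (n : ℕ) : Finset (Σ _ : ℕ, ℕ) :=
  (Finset.range (Nat.sqrt (4 * n / 3) + 1)).sigma fun a => Finset.range a

lemma card_reducedPairs_le (n : ℕ) : (reducedPairs n).card ≤ n := by
  rw [reducedPairs, Finset.card_sigma]
  simp only [Finset.card_range]
  have h := Finset.sum_range_id_mul_two (Nat.sqrt (4 * n / 3) + 1)
  have hs := Nat.sqrt_le' (4 * n / 3)
  generalize Nat.sqrt (4 * n / 3) = A at *
  have hA : 3 * A ^ 2 ≤ 4 * n := by omega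
  rw [Nat.add_sub_cancel] at h
  rcases Nat.lt_or_ge A 2 with h2 | h2
  · interval_cases A <;> omega
  · nlinarith

lemma mem_reducedPairs {n a b : ℕ} (hb : b < a) (ha : 3 * a ^ 2 ≤ 4 * n) :
    (⟨a, b⟩ : Σ _ : ℕ, ℕ) ∈ reducedPairs n := by
  simp only [reducedPairs, Finset.mem_sigma, Finset.mem_range]
  refine ⟨Nat.lt_succ_of_le (Nat.le_sqrt'.2 ?_), hb⟩
  omega

variable {R : Type*} [CommRing R]

/-- The homothetic image `α⁻¹ J` of an ideal `J` under an embedding into `ℂ`. -/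
noncomputable def scaledLattice (φ : R →+* ℂ) (J : Ideal R) (α : R) : AddSubgroup ℂ :=
  J.toAddSubgroup.map ((AddMonoidHom.mulRight (φ α)⁻¹).comp φ.toAddMonoidHom)

lemma mem_scaledLattice {φ : R →+* ℂ} {J : Ideal R} {α : R} {x : ℂ} :
    x ∈ scaledLattice φ J α ↔ ∃ j ∈ J, φ j * (φ α)⁻¹ = x := by
  simp [scaledLattice]

lemma span_mul_le_of_scaledLattice_le {φ : R →+* ℂ} (hφ : Function.Injective φ) {I J : Ideal R}
    {α β : R} (hα : α ≠ 0) (hβ : β ≠ 0)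
    (h : scaledLattice φ I α ≤ scaledLattice φ J β) :
    Ideal.span {β} * I ≤ Ideal.span {α} * J := by
  rw [Ideal.span_singleton_mul_le_span_singleton_mul]
  intro i hi
  obtain ⟨j, hj, hij⟩ := mem_scaledLattice.1 (h (mem_scaledLattice.2 ⟨i, hi, rfl⟩))
  refine ⟨j, hj, hφ ?_⟩
  have hα' : φ α ≠ 0 := (map_ne_zero_iff φ hφ).2 hα
  have hβ' : φ β ≠ 0 := (map_ne_zero_iff φ hφ).2 hβ
  rw [map_mul, map_mul]
  field_simp at hij
  linear_combination -hij

/-- A nonzero ideal has a nonzero element of smallest absolute value. -/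
lemma exists_minimal_normSq {φ : R →+* ℂ} (hnorm : ∀ x, ∃ m : ℕ, normSq (φ x) = m)
    {J : Ideal R} (hJ : J ≠ ⊥) :
    ∃ α ∈ J, α ≠ 0 ∧ ∀ x ∈ J, x ≠ 0 → normSq (φ α) ≤ normSq (φ x) := by
  choose N hN using hnorm
  obtain ⟨y, hy, hy0⟩ := Submodule.exists_mem_ne_zero_of_ne_bot hJ
  obtain ⟨α, ⟨hα, hα0⟩, hmin⟩ := (InvImage.wf N (wellFounded_lt (α := ℕ))).has_min
    {x | x ∈ J ∧ x ≠ 0} ⟨y, hy, hy0⟩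
  refine ⟨α, hα, hα0, fun x hx hx0 => ?_⟩
  have h : ¬ N x < N α := hmin x ⟨hx, hx0⟩
  rw [hN, hN]
  exact_mod_cast not_lt.1 h

/-- A nonzero ideal is homothetic to a reduced lattice. -/
lemma exists_reduced_scaledLattice {n : ℕ} (hn : 0 < n) {φ : R →+* ℂ}
    (hφ : Function.Injective φ) (hnorm : ∀ x, ∃ m : ℕ, normSq (φ x) = m) {ω : R}
    (hω : φ ω ^ 2 = -(n : ℂ)) {J : Ideal R} (hJ : J ≠ ⊥) :
    ∃ α ≠ 0, ∃ q ∈ reducedPairs n, ∀ x, x ∈ scaledLattice φ J α ↔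
      ∃ u v : ℤ, x = u + v * ((φ ω + (q.2 : ℂ)) / (q.1 : ℂ)) := by
  obtain ⟨α, hα, hα0, hmin⟩ := exists_minimal_normSq hnorm hJ
  have hα' : φ α ≠ 0 := (map_ne_zero_iff φ hφ).2 hα0
  obtain ⟨a, b, hb, ha, h⟩ := exists_reduced_basis hn hω (L := scaledLattice φ J α)
    (mem_scaledLattice.2 ⟨α, hα, mul_inv_cancel₀ hα'⟩)
    (mem_scaledLattice.2 ⟨ω * α, J.mul_mem_left ω hα, by
      rw [map_mul, mul_assoc, mul_inv_cancel₀ hα', mul_one]⟩) (by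
      intro x hx hx0
      obtain ⟨j, hj, rfl⟩ := mem_scaledLattice.1 hx
      have hj0 : j ≠ 0 := by
        rintro rfl
        simp at hx0
      rw [map_mul, map_inv₀, ← div_eq_mul_inv, one_le_div (normSq_pos.2 hα')]
      exact hmin j hj hj0)
  exact ⟨α, hα0, ⟨a, b⟩, mem_reducedPairs hb ha, h⟩

theorem card_classGroup_le [IsDedekindDomain R] {n : ℕ} (hn : 0 < n) {φ : R →+* ℂ}
    (hφ : Function.Injective φ) (hnorm : ∀ x, ∃ m : ℕ, normSq (φ x) = m) {ω : R}
    (hω : φ ω ^ 2 = -(n : ℂ)) : Nat.card (ClassGroup R) ≤ n := by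
  choose J hJ using ClassGroup.mk0_surjective (R := R)
  choose α hα q hq h using fun C : ClassGroup R => exists_reduced_scaledLattice hn hφ hnorm hω
    (nonZeroDivisors.ne_zero (J C).2)
  have hinj : Function.Injective fun C => (⟨q C, hq C⟩ : reducedPairs n) := by
    intro C D hCD
    have hqq : q C = q D := congrArg Subtype.val hCD
    have hL : scaledLattice φ (J C) (α C) = scaledLattice φ (J D) (α D) := by
      ext x
      rw [h C, h D, hqq]
    rw [← hJ C, ← hJ D, ClassGroup.mk0_eq_mk0_iff]
    exact ⟨α D, α C, hα D, hα C, le_antisymm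
      (span_mul_le_of_scaledLattice_le hφ (hα C) (hα D) hL.le)
      (span_mul_le_of_scaledLattice_le hφ (hα D) (hα C) hL.ge)⟩
  calc Nat.card (ClassGroup R) ≤ Nat.card (reducedPairs n) := Nat.card_le_card_of_injective _ hinj
    _ = (reducedPairs n).card := by simp
    _ ≤ n := card_reducedPairs_le n

lemma exists_rat_add_mul_of_mem_adjoin {n : ℕ} {z : ℂ} (hz : z ^ 2 = -(n : ℂ)) {x : ℂ}
    (hx : x ∈ IntermediateField.adjoin ℚ {z}) : ∃ r s : ℚ, x = r + s * z := by
  have hint : IsIntegral ℚ z := by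
    refine IsIntegral.of_pow (n := 2) two_pos ?_
    rw [hz]
    exact (isIntegral_algebraMap (x := (n : ℚ))).neg
  rw [← IntermediateField.mem_toSubalgebra,
    IntermediateField.adjoin_simple_toSubalgebra_of_isAlgebraic hint.isAlgebraic] at hx
  induction hx using Algebra.adjoin_induction with
  | mem y hy =>
    rw [Set.mem_singleton_iff] at hy
    exact ⟨0, 1, by simp [hy]⟩
  | algebraMap r => exact ⟨r, 0, by simp⟩
  | add y w _ _ hy hw =>
    obtain ⟨r, s, rfl⟩ := hy
    obtain ⟨r', s', rfl⟩ := hw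
    exact ⟨r + r', s + s', by push_cast; ring⟩
  | mul y w _ _ hy hw =>
    obtain ⟨r, s, rfl⟩ := hy
    obtain ⟨r', s', rfl⟩ := hw
    exact ⟨r * r' - n * s * s', r * s' + s * r', by push_cast; linear_combination s * s' * hz⟩

lemma exists_nat_normSq_of_isIntegral {n : ℕ} (hn : 0 < n) {z : ℂ} (hz : z ^ 2 = -(n : ℂ)) {x : ℂ}
    (hx : x ∈ IntermediateField.adjoin ℚ {z}) (hint : IsIntegral ℤ x) :
    ∃ m : ℕ, normSq x = m := by
  obtain ⟨r, s, hrs⟩ := exists_rat_add_mul_of_mem_adjoin hz hx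
  obtain ⟨hre, him⟩ := re_eq_zero_and_im_sq_of_sq_eq_neg hn hz
  have hN : normSq x = ((r ^ 2 + n * s ^ 2 : ℚ) : ℝ) := by
    rw [hrs, normSq_apply]
    simp [hre]
    linear_combination (s : ℝ) ^ 2 * him
  have hI : IsIntegral ℤ (x * (starRingEnd ℂ) x) :=
    hint.mul (hint.map (starRingEnd ℂ).toIntAlgHom)
  rw [mul_conj, hN] at hI
  have hI' : IsIntegral ℤ (algebraMap ℚ ℂ (r ^ 2 + n * s ^ 2)) := by simpa using hI
  rw [isIntegral_algebraMap_iff (algebraMap ℚ ℂ).injective] at hI'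
  obtain ⟨m, hm⟩ := IsIntegrallyClosed.isIntegral_iff.1 hI'
  have hNm : normSq x = (m : ℝ) := by
    rw [hN, ← hm]
    simp
  have hm0 : 0 ≤ m := by exact_mod_cast hNm ▸ normSq_nonneg x
  obtain ⟨k, rfl⟩ := Int.eq_ofNat_of_zero_le hm0
  exact ⟨k, by simpa using hNm⟩

theorem classNumber_adjoin_sqrt_neg_le {n : ℕ} (hn : 0 < n) {z : ℂ} (hz : z ^ 2 = -(n : ℂ))
    {K : IntermediateField ℚ ℂ} (hK : K = IntermediateField.adjoin ℚ {z}) [NumberField K] :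
    NumberField.classNumber K ≤ n := by
  have hzK : z ∈ K := by
    rw [hK]
    exact IntermediateField.mem_adjoin_simple_self ℚ z
  have hzint : IsIntegral ℤ (⟨z, hzK⟩ : K) := by
    refine IsIntegral.of_pow (n := 2) two_pos ?_
    have : (⟨z, hzK⟩ : K) ^ 2 = algebraMap ℤ K (-(n : ℤ)) := by
      ext
      simp [hz]
    rw [this]
    exact isIntegral_algebraMap
  let φ : NumberField.RingOfIntegers K →+* ℂ :=
    (algebraMap K ℂ).comp (algebraMap (NumberField.RingOfIntegers K) K)
  have hφ : Function.Injective φ :=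
    (algebraMap K ℂ).injective.comp NumberField.RingOfIntegers.coe_injective
  rw [NumberField.classNumber, ← Nat.card_eq_fintype_card]
  refine card_classGroup_le hn hφ (fun x => ?_) (ω := ⟨⟨z, hzK⟩, hzint⟩) hz
  refine exists_nat_normSq_of_isIntegral hn hz (x := φ x) ?_ ?_
  · rw [← hK]
    exact (x : K).2
  · exact (NumberField.RingOfIntegers.isIntegral x).map φ.toIntAlgHom

end ImaginaryQuadratic

/-- Let `p` be a prime number greater than `3`. Then `p` divides neither the class number of
`ℚ(√(1 − p))` nor the class number of `ℚ(√(4 − p))`. -/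
theorem stmt_1 (p : ℕ) (hp : p.Prime) (h3 : 3 < p)
    (z1 z2 : ℂ) (hz1 : z1 ^ 2 = 1 - (p : ℂ)) (hz2 : z2 ^ 2 = 4 - (p : ℂ))
    (K1 K2 : IntermediateField ℚ ℂ)
    (hK1 : K1 = IntermediateField.adjoin ℚ {z1})
    (hK2 : K2 = IntermediateField.adjoin ℚ {z2})
    [NumberField K1] [NumberField K2] :
    ¬ (p ∣ NumberField.classNumber K1) ∧ ¬ (p ∣ NumberField.classNumber K2) := by
  have h4 : p ≠ 4 := by
    rintro rfl
    norm_num at hp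
  have hc1 : NumberField.classNumber K1 ≤ p - 1 :=
    classNumber_adjoin_sqrt_neg_le (by omega)
      (by rw [hz1, Nat.cast_sub (by omega)]; push_cast; ring) hK1
  have hc2 : NumberField.classNumber K2 ≤ p - 4 :=
    classNumber_adjoin_sqrt_neg_le (by omega)
      (by rw [hz2, Nat.cast_sub (by omega)]; push_cast; ring) hK2
  have hpos1 : 0 < NumberField.classNumber K1 := Fintype.card_pos
  have hpos2 : 0 < NumberField.classNumber K2 := Fintype.card_pos
  exact ⟨Nat.not_dvd_of_pos_of_lt hpos1 (by omega), Nat.not_dvd_of_pos_of_lt hpos2 (by omega)⟩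
end

section
/- Let p be an odd prime number. If n1 and n2 are integers greater than 8 such that ℚ(√(1 − 4p^{n1})) = ℚ(√(1 − 4p^{n2})) (equivalently, the squarefree parts of 1 − 4p^{n1} and 1 − 4p^{n2} coincide), then n1 = n2. -/
theorem mem_adjoin_simple_of_sq_eq {z w : ℂ} {M : ℚ} (hz : z ^ 2 = M)
    (hw : w ∈ IntermediateField.adjoin ℚ {z}) : ∃ u v : ℚ, w = u + v * z := by
  have hint : IsIntegral ℚ z := by
    refine ⟨Polynomial.X ^ 2 - Polynomial.C M, Polynomial.monic_X_pow_sub_C M two_ne_zero, ?_⟩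
    simp [hz]
  have hw' : w ∈ Algebra.adjoin ℚ {z} := by
    rwa [← IntermediateField.adjoin_simple_toSubalgebra_of_isAlgebraic hint.isAlgebraic]
  clear hw
  induction hw' using Algebra.adjoin_induction with
  | mem x hx =>
    obtain rfl : x = z := hx
    exact ⟨0, 1, by simp⟩
  | algebraMap r => exact ⟨r, 0, by simp⟩
  | add x y hx hy h1 h2 =>
    obtain ⟨a, b, rfl⟩ := h1
    obtain ⟨c, d, rfl⟩ := h2
    exact ⟨a + c, b + d, by push_cast; ring⟩
  | mul x y hx hy h1 h2 =>
    obtain ⟨a, b, rfl⟩ := h1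
    obtain ⟨c, d, rfl⟩ := h2
    exact ⟨a * c + b * d * M, a * d + b * c, by push_cast; linear_combination (b * d : ℂ) * hz⟩

theorem exists_common_mul_sq {z w : ℂ} {M N : ℤ} (hM : M < 0) (hN : N < 0)
    (hz : z ^ 2 = M) (hw : w ^ 2 = N) (hwz : w ∈ IntermediateField.adjoin ℚ {z}) :
    ∃ D a b : ℤ, M = D * a ^ 2 ∧ N = D * b ^ 2 := by
  obtain ⟨u, v, rfl⟩ := mem_adjoin_simple_of_sq_eq (M := M) (by simpa using hz) hwz
  have not_rat (K : ℤ) (hK : K < 0) (t : ℚ) : (t : ℂ) ^ 2 ≠ K := by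
    intro h
    have h' : t ^ 2 = K := by exact_mod_cast h
    have : (K : ℚ) < 0 := by exact_mod_cast hK
    nlinarith [sq_nonneg t]
  have huv : u = 0 := by
    by_contra hu
    by_cases hv : v = 0
    · exact not_rat N hN u (by simpa [hv] using hw)
    · have huC : (u : ℂ) ≠ 0 := by exact_mod_cast hu
      have hvC : (v : ℂ) ≠ 0 := by exact_mod_cast hv
      refine not_rat M hM ((N - u ^ 2 - v ^ 2 * M) / (2 * u * v)) ?_
      rw [← hz]
      congr 1
      push_cast
      field_simp
      linear_combination -hw + (v : ℂ) ^ 2 * hz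
  have hNM : (N : ℚ) = v ^ 2 * M := by
    have : (N : ℂ) = (v : ℂ) ^ 2 * M := by
      rw [← hw, ← hz, huv]
      push_cast
      ring
    exact_mod_cast this
  have hden : (v.den : ℚ) ≠ 0 := by exact_mod_cast v.den_ne_zero
  have hcross : N * (v.den : ℤ) ^ 2 = v.num ^ 2 * M := by
    have : (N : ℚ) * v.den ^ 2 = v.num ^ 2 * M := by
      rw [hNM]
      nth_rewrite 1 [← Rat.num_div_den v]
      field_simp
    exact_mod_cast this
  have hcop : IsCoprime ((v.den : ℤ) ^ 2) (v.num ^ 2) := by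
    have : IsCoprime (v.den : ℤ) v.num := by
      rw [Int.isCoprime_iff_gcd_eq_one]
      simpa [Int.gcd, Nat.Coprime] using v.reduced.symm
    exact this.pow
  obtain ⟨D, hD⟩ := hcop.dvd_of_dvd_mul_left (Dvd.intro_left N hcross)
  refine ⟨D, v.den, v.num, by rw [hD]; ring, ?_⟩
  have h0 : (v.den : ℤ) ^ 2 ≠ 0 := pow_ne_zero _ (by exact_mod_cast v.den_ne_zero)
  apply mul_right_cancel₀ h0
  rw [hcross, hD]
  ring

section
variable {p : ℕ} [Fact p.Prime]

theorem PadicInt.isUnit_of_dvd_sub_one {x : ℤ_[p]} (h : (p : ℤ_[p]) ∣ x - 1) : IsUnit x := by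
  by_contra hx
  rw [PadicInt.not_isUnit_iff, PadicInt.norm_lt_one_iff_dvd] at hx
  exact PadicInt.prime_p.not_dvd_one ((dvd_sub_right hx).1 h)

/-- If `c + d = 1`, `c * d = p ^ g` and `c ^ i + d ^ i = 1` with `c ≡ 1` modulo `p`, lifting the exponent forces
`i = 1`. -/
theorem PadicInt.eq_one_of_pow_add_pow_eq_one (hodd : Odd p) {c d : ℤ_[p]} {g i : ℕ}
    (hg : g ≠ 0) (hi : i ≠ 0) (hc : (p : ℤ_[p]) ∣ c - 1) (hadd : c + d = 1)
    (hmul : c * d = (p : ℤ_[p]) ^ g) (hpow : c ^ i + d ^ i = 1) : i = 1 := by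
  have hp : p.Prime := Fact.out
  have hu := PadicInt.isUnit_of_dvd_sub_one hc
  set N := g * i + g + 1
  set C : ℤ := (c.appr N : ℤ)
  have happ : (p : ℤ_[p]) ^ N ∣ c - C := by
    simpa [C, Ideal.mem_span_singleton] using PadicInt.appr_spec N c
  have hle {k : ℕ} (hk : k ≤ N) : (p : ℤ_[p]) ^ k ∣ c - C := (pow_dvd_pow _ hk).trans happ
  have hdvd : (p : ℤ_[p]) ^ g ∣ d := by
    rw [← hu.dvd_mul_left, hmul]
  have hC1 : ¬ (p : ℤ) ^ (g + 1) ∣ C - 1 := by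
    rw [← PadicInt.pow_p_dvd_int_iff]
    intro h
    have h1 : (p : ℤ_[p]) ^ (g + 1) ∣ c * d := by
      apply Dvd.dvd.mul_left
      have := dvd_add (hle (k := g + 1) (by omega)) h
      rw [← dvd_neg]
      convert this using 1
      push_cast
      linear_combination -hadd
    rw [hmul, pow_dvd_pow_iff PadicInt.prime_p.ne_zero PadicInt.prime_p.not_isUnit] at h1
    omega
  have hCi : (p : ℤ) ^ (g * i) ∣ C ^ i - 1 ^ i := by
    rw [← PadicInt.pow_p_dvd_int_iff]
    have h1 : (p : ℤ_[p]) ^ (g * i) ∣ c ^ i - (C : ℤ_[p]) ^ i :=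
      (hle (by omega)).trans (sub_dvd_pow_sub_pow _ _ _)
    have h2 : (p : ℤ_[p]) ^ (g * i) ∣ d ^ i := by
      rw [pow_mul]
      exact pow_dvd_pow_of_dvd hdvd i
    rw [← dvd_neg]
    convert dvd_add h1 h2 using 1
    push_cast
    linear_combination -hpow
  have hCp : (p : ℤ) ∣ C - 1 := by
    have : (p : ℤ_[p]) ^ 1 ∣ ((C - 1 : ℤ) : ℤ_[p]) := by
      rw [← dvd_neg, pow_one]
      have h1 : (p : ℤ_[p]) ∣ c - C := by simpa using hle (k := 1) (by omega)
      have := dvd_sub h1 hc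
      convert this using 1
      push_cast
      ring
    simpa using (PadicInt.pow_p_dvd_int_iff 1 _).1 this
  have hCn : ¬ (p : ℤ) ∣ C := by
    intro h
    exact (Nat.prime_iff_prime_int.1 hp).not_dvd_one ((dvd_sub_right h).1 hCp)
  have hlte := Int.emultiplicity_pow_sub_pow hp hodd hCp hCn i
  have h1 : ((g * i : ℕ) : ℕ∞) ≤ emultiplicity (p : ℤ) (C ^ i - 1 ^ i) :=
    le_emultiplicity_of_pow_dvd hCi
  have h2 : emultiplicity (p : ℤ) (C - 1) < ((g + 1 : ℕ) : ℕ∞) :=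
    emultiplicity_lt_iff_not_dvd.2 hC1
  by_contra hi1
  have h3 : emultiplicity p i < ((i - 1 : ℕ) : ℕ∞) := by
    rw [emultiplicity_lt_iff_not_dvd]
    intro h
    have h4 := Nat.le_of_dvd (Nat.pos_of_ne_zero hi) h
    have h5 : i - 1 < 2 ^ (i - 1) := Nat.lt_two_pow_self
    have h6 : 2 ^ (i - 1) < p ^ (i - 1) :=
      Nat.pow_lt_pow_left (lt_of_le_of_ne hp.two_le (by rintro rfl; exact absurd hodd (by decide)))
        (by omega)
    omega
  rw [hlte] at h1
  obtain ⟨e, he⟩ := ENat.ne_top_iff_exists.1 (ne_top_of_lt h2)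
  obtain ⟨f, hf⟩ := ENat.ne_top_iff_exists.1 (ne_top_of_lt h3)
  rw [← he, ← hf] at h1
  rw [← he] at h2
  rw [← hf] at h3
  norm_cast at h1 h2 h3
  obtain ⟨j, rfl⟩ : ∃ j, i = j + 2 := ⟨i - 2, by omega⟩
  obtain ⟨g, rfl⟩ := Nat.exists_eq_succ_of_ne_zero hg
  have : j + 2 - 1 = j + 1 := by omega
  rw [this] at h3
  nlinarith

/-- Over `ℤ_[p]`, the polynomial `X ^ 2 - X + q` has a root when `p ∣ q`. -/
theorem PadicInt.exists_mul_one_sub_eq {q : ℤ_[p]} (hq : (p : ℤ_[p]) ∣ q) :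
    ∃ r : ℤ_[p], r * (1 - r) = q := by
  obtain ⟨r, hr, -⟩ := HenselianRing.is_henselian (I := IsLocalRing.maximalIdeal ℤ_[p])
    (Polynomial.X ^ 2 - Polynomial.X + Polynomial.C q) (by monicity!) 1
    (by simpa [PadicInt.maximalIdeal_eq_span_p, Ideal.mem_span_singleton] using hq)
    (by
      refine IsUnit.map _ ?_
      simp)
  refine ⟨r, ?_⟩
  simp only [Polynomial.IsRoot, Polynomial.eval_add, Polynomial.eval_sub, Polynomial.eval_pow,
    Polynomial.eval_X, Polynomial.eval_C] at hr
  linear_combination -hr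

end

section
open QuadraticAlgebra

section
variable {p : ℕ} [Fact p.Prime] {A : ℤ} (Φ : QuadraticAlgebra ℤ A 1 →+* ℤ_[p])

/-- Elements of norm `p ^ k` reducing to `1` modulo `p` under the chosen embedding in `ℤ_[p]`. -/
def IsPrincipalPower (k : ℕ) (x : QuadraticAlgebra ℤ A 1) : Prop :=
  norm x = (p : ℤ) ^ k ∧ (p : ℤ_[p]) ∣ Φ x - 1

variable {Φ}

namespace IsPrincipalPower
variable {k l : ℕ} {x y : QuadraticAlgebra ℤ A 1}

theorem mul_star_eq (hx : IsPrincipalPower Φ k x) :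
    x * star x = (p : QuadraticAlgebra ℤ A 1) ^ k := by
  rw [← algebraMap_norm_eq_mul_star, hx.1]
  simp

theorem map_mul_star (hx : IsPrincipalPower Φ k x) : Φ x * Φ (star x) = (p : ℤ_[p]) ^ k := by
  rw [← map_mul, hx.mul_star_eq]
  simp

theorem isUnit (hx : IsPrincipalPower Φ k x) : IsUnit (Φ x) :=
  PadicInt.isUnit_of_dvd_sub_one hx.2

theorem dvd_map_star (hx : IsPrincipalPower Φ k x) : (p : ℤ_[p]) ^ k ∣ Φ (star x) := by
  rw [← hx.isUnit.dvd_mul_left, hx.map_mul_star]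

theorem pow (hx : IsPrincipalPower Φ k x) (i : ℕ) : IsPrincipalPower Φ (k * i) (x ^ i) := by
  refine ⟨by rw [map_pow, hx.1, pow_mul], hx.2.trans ?_⟩
  simpa using sub_dvd_pow_sub_pow (Φ x) 1 i

end IsPrincipalPower

theorem map_add_map_star (x : QuadraticAlgebra ℤ A 1) :
    Φ x + Φ (star x) = ((trace x : ℤ) : ℤ_[p]) := by
  rw [← map_add, show x + star x = ((trace x : ℤ) : QuadraticAlgebra ℤ A 1) by
    ext
    · simp [trace_def]; ring
    · simp, map_intCast]

theorem pow_dvd_of_dvd_map (hA : ¬ (p : ℤ) ∣ 4 * A + 1) {k : ℕ} {z : QuadraticAlgebra ℤ A 1}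
    (hz : (p : ℤ_[p]) ^ k ∣ Φ z) (hz' : (p : ℤ_[p]) ^ k ∣ Φ (star z)) :
    (p : QuadraticAlgebra ℤ A 1) ^ k ∣ z := by
  have hmap : Φ z = z.re + z.im * Φ ω := by
    conv_lhs => rw [show z = (z.re : QuadraticAlgebra ℤ A 1) + (z.im : QuadraticAlgebra ℤ A 1) * ω
      by ext <;> simp]
    simp
  have hmap' : Φ (star z) = z.re + z.im * (1 - Φ ω) := by
    conv_lhs => rw [show star z = (z.re : QuadraticAlgebra ℤ A 1) +
      (z.im : QuadraticAlgebra ℤ A 1) * (1 - ω) by ext <;> simp]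
    simp
  have hω : Φ ω * Φ ω = A + Φ ω := by
    rw [← map_mul, show (ω * ω : QuadraticAlgebra ℤ A 1) = (A : QuadraticAlgebra ℤ A 1) + ω by
      ext <;> simp]
    simp
  have hunit : IsUnit (2 * Φ ω - 1) := by
    have h1 : IsUnit ((4 * A + 1 : ℤ) : ℤ_[p]) := by
      by_contra h
      rw [PadicInt.not_isUnit_iff, PadicInt.norm_int_lt_one_iff_dvd] at h
      exact hA h
    refine isUnit_of_mul_isUnit_left (y := 2 * Φ ω - 1) ?_
    convert h1 using 1
    push_cast
    linear_combination 4 * hω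
  have him : (p : ℤ_[p]) ^ k ∣ z.im := by
    rw [← hunit.dvd_mul_right]
    convert dvd_sub hz hz' using 1
    rw [hmap, hmap']
    ring
  have hre : (p : ℤ_[p]) ^ k ∣ z.re := by
    rw [hmap] at hz
    exact (dvd_add_left (him.mul_right _)).1 hz
  obtain ⟨a, ha⟩ := (PadicInt.pow_p_dvd_int_iff k _).1 him
  obtain ⟨b, hb⟩ := (PadicInt.pow_p_dvd_int_iff k _).1 hre
  refine ⟨⟨b, a⟩, ?_⟩
  rw [← Nat.cast_pow, ← C_natCast, C_mul_eq_smul]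
  ext <;> simp [ha, hb]

namespace IsPrincipalPower
variable {k l : ℕ} {x y : QuadraticAlgebra ℤ A 1}

theorem exists_eq_mul (hA : ¬ (p : ℤ) ∣ 4 * A + 1) (hx : IsPrincipalPower Φ k x)
    (hy : IsPrincipalPower Φ l y) (hkl : k ≤ l) :
    ∃ z, IsPrincipalPower Φ (l - k) z ∧ y = x * z := by
  have hp0 : (p : ℤ) ≠ 0 := by exact_mod_cast (Fact.out : p.Prime).ne_zero
  obtain ⟨z, hz⟩ : (p : QuadraticAlgebra ℤ A 1) ^ k ∣ y * star x := by
    apply pow_dvd_of_dvd_map (Φ := Φ) hA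
    · rw [map_mul]
      exact hx.dvd_map_star.mul_left _
    · rw [star_mul, star_star, map_mul]
      exact ((pow_dvd_pow _ hkl).trans hy.dvd_map_star).mul_left _
  have hyx : y = x * z := by
    have h : (p : QuadraticAlgebra ℤ A 1) ^ k * y = (p : QuadraticAlgebra ℤ A 1) ^ k * (x * z) := by
      rw [mul_left_comm, ← hz, ← hx.mul_star_eq]
      ring
    rw [← Nat.cast_pow, ← C_natCast, C_mul_eq_smul, C_mul_eq_smul] at h
    have hq : ((p ^ k : ℕ) : ℤ) ≠ 0 := by push_cast; exact pow_ne_zero _ hp0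
    ext
    · exact mul_left_cancel₀ hq (congrArg QuadraticAlgebra.re h)
    · exact mul_left_cancel₀ hq (congrArg QuadraticAlgebra.im h)
  refine ⟨z, ⟨?_, ?_⟩, hyx⟩
  · have h := hy.1
    rw [hyx, map_mul, hx.1, ← Nat.add_sub_cancel' hkl, pow_add] at h
    simpa using mul_left_cancel₀ (pow_ne_zero k hp0) h
  · rw [← hx.isUnit.dvd_mul_left]
    convert dvd_sub hy.2 hx.2 using 1
    rw [hyx, map_mul]
    ring

theorem map_trace_sub_one_dvd (hk : k ≠ 0) (hx : IsPrincipalPower Φ k x) :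
    (p : ℤ) ∣ trace x - 1 := by
  have h : (p : ℤ_[p]) ^ 1 ∣ ((trace x - 1 : ℤ) : ℤ_[p]) := by
    rw [Int.cast_sub, Int.cast_one, ← map_add_map_star, pow_one]
    convert dvd_add hx.2 ((dvd_pow_self _ hk).trans hx.dvd_map_star) using 1
    ring
  simpa using (PadicInt.pow_p_dvd_int_iff 1 _).1 h

theorem eq_one (hodd : Odd p) (hneg : A < 0) (hA : ¬ (p : ℤ) ∣ 4 * A + 1)
    (hx : IsPrincipalPower Φ 0 x) : x = 1 := by
  have hp : p.Prime := Fact.out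
  have hp3 : 3 ≤ p := by
    rcases hp.two_le.eq_or_lt with h | h
    · subst h; exact absurd hodd (by decide)
    · exact h
  have hnorm : (2 * x.re + x.im) ^ 2 - (4 * A + 1) * x.im ^ 2 = 4 := by
    have := hx.1
    rw [norm_def] at this
    linear_combination 4 * this
  have htr : (p : ℤ) ∣ (2 * x.re + x.im) - 2 := by
    have h : (p : ℤ_[p]) ^ 1 ∣ ((2 * x.re + x.im - 2 : ℤ) : ℤ_[p]) := by
      have h1 := map_add_map_star (Φ := Φ) x
      rw [trace_def, one_mul] at h1
      have h2 := hx.map_mul_star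
      rw [pow_zero] at h2
      have h3 : (p : ℤ_[p]) ∣ Φ (star x) - 1 := by
        rw [← hx.isUnit.dvd_mul_left, mul_sub, h2, mul_one, ← dvd_neg, neg_sub]
        exact hx.2
      rw [pow_one]
      convert dvd_add hx.2 h3 using 1
      push_cast at h1 ⊢
      linear_combination -h1
    simpa using (PadicInt.pow_p_dvd_int_iff 1 _).1 h
  obtain ⟨c, hc⟩ := htr
  have him : x.im = 0 := by
    by_contra h0
    have h1 : 1 ≤ x.im ^ 2 := by have := sq_pos_of_ne_zero h0; omega
    have hb : (2 * x.re + x.im) ^ 2 ≤ 1 := by nlinarith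
    have hb1 : -1 ≤ 2 * x.re + x.im := by nlinarith
    have hb2 : 2 * x.re + x.im ≤ 1 := by nlinarith
    have hc0 : c < 0 := by
      by_contra hc0
      have : 0 ≤ (p : ℤ) * c := by have := not_lt.1 hc0; positivity
      omega
    have hp3' : (3 : ℤ) ≤ p := by exact_mod_cast hp3
    have hc1 : c = -1 := by
      by_contra hc1
      have : c ≤ -2 := by omega
      nlinarith
    have hpe : (p : ℤ) = 3 := by subst hc1; omega
    have ht : 2 * x.re + x.im = -1 := by subst hc1; omega
    have h3 : (4 * A + 1) * x.im ^ 2 = -3 := by rw [ht] at hnorm; linarith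
    have hA1 : A = -1 := by nlinarith
    exact hA (by rw [hA1, hpe]; norm_num)
  have hre : x.re ^ 2 = 1 := by rw [him] at hnorm; linarith
  rcases (sq_eq_sq_iff_eq_or_eq_neg.1 (hre.trans (one_pow 2).symm)) with h | h
  · ext <;> simp [h, him]
  · exfalso
    rw [h, him] at hc
    have : (p : ℤ) ∣ 4 := ⟨-c, by linarith⟩
    have h4 : p ∣ 2 ^ 2 := by exact_mod_cast this
    have := Nat.le_of_dvd two_pos (hp.dvd_of_dvd_pow h4)
    omega

theorem exists_pow_eq (hodd : Odd p) (hneg : A < 0) (hA : ¬ (p : ℤ) ∣ 4 * A + 1)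
    (hk : k ≠ 0) (hx : IsPrincipalPower Φ k x) :
    ∃ g γ, g ≠ 0 ∧ IsPrincipalPower Φ g γ ∧
      ∀ l y, IsPrincipalPower Φ l y → ∃ i, y = γ ^ i ∧ l = g * i := by
  classical
  have hex : ∃ g, g ≠ 0 ∧ ∃ γ, IsPrincipalPower Φ g γ := ⟨k, hk, x, hx⟩
  obtain ⟨hg0, γ, hγ⟩ := Nat.find_spec hex
  refine ⟨Nat.find hex, γ, hg0, hγ, fun l => ?_⟩
  induction l using Nat.strong_induction_on with
  | _ l ih =>
    intro y hy
    rcases Nat.eq_zero_or_pos l with rfl | hl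
    · exact ⟨0, by simpa using hy.eq_one hodd hneg hA, by simp⟩
    · have hle : Nat.find hex ≤ l := Nat.find_min' hex ⟨hl.ne', y, hy⟩
      obtain ⟨z, hz, rfl⟩ := hγ.exists_eq_mul hA hy hle
      obtain ⟨i, rfl, hi⟩ := ih _ (by omega) z hz
      exact ⟨i + 1, by rw [pow_succ'], by rw [mul_add, ← hi]; omega⟩

end IsPrincipalPower
end

section
variable {p : ℕ} [Fact p.Prime] {A : ℤ} {Φ : QuadraticAlgebra ℤ A 1 →+* ℤ_[p]}

namespace IsPrincipalPower

theorem trace_eq_one_of_odd (hodd : Odd p) {k i : ℕ} {x : QuadraticAlgebra ℤ A 1} (hk : k ≠ 0)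
    (hi : Odd i) (hx : IsPrincipalPower Φ k x) (htr : trace (x ^ i) = 1) : trace x = 1 := by
  have hp : p.Prime := Fact.out
  have hdvd : algebraMap ℤ (QuadraticAlgebra ℤ A 1) (trace x) ∣ algebraMap ℤ _ 1 := by
    have h1 := congrArg (algebraMap ℤ (QuadraticAlgebra ℤ A 1)) htr
    rw [algebraMap_trace_eq_add_star, star_pow] at h1
    rw [← h1, algebraMap_trace_eq_add_star]
    exact hi.add_dvd_pow_add_pow x (star x)
  rw [algebraMap_dvd_iff_dvd] at hdvd
  rcases Int.isUnit_iff.1 (isUnit_of_dvd_one hdvd) with h | h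
  · exact h
  · exfalso
    have h2 := hx.map_trace_sub_one_dvd hk
    rw [h] at h2
    have h3 : p ∣ 2 := by
      have : (p : ℤ) ∣ 2 := by simpa using (dvd_neg.2 h2)
      exact_mod_cast this
    rw [(Nat.prime_dvd_prime_iff_eq hp Nat.prime_two).1 h3] at hodd
    exact absurd hodd (by decide)

theorem eq_one_of_trace_pow_eq_one (hodd : Odd p) {k i : ℕ} {x : QuadraticAlgebra ℤ A 1}
    (hk : k ≠ 0) (hi : i ≠ 0) (hx : IsPrincipalPower Φ k x) (h1 : trace x = 1)
    (htr : trace (x ^ i) = 1) : i = 1 := by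
  refine PadicInt.eq_one_of_pow_add_pow_eq_one hodd hk hi hx.2 ?_ hx.map_mul_star ?_
  · rw [map_add_map_star, h1, Int.cast_one]
  · rw [← map_pow, ← map_pow, ← star_pow, map_add_map_star, htr, Int.cast_one]

theorem exponent_unique (hodd : Odd p) (hneg : A < 0) (hA : ¬ (p : ℤ) ∣ 4 * A + 1) {k l : ℕ}
    {x y : QuadraticAlgebra ℤ A 1} (hk : k ≠ 0) (hl : l ≠ 0) (hx : IsPrincipalPower Φ k x)
    (hy : IsPrincipalPower Φ l y) (hxtr : trace x = 1) (hytr : trace y = 1) : k = l := by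
  obtain ⟨g, γ, hg, hγ, hgen⟩ := hx.exists_pow_eq hodd hneg hA hk
  obtain ⟨i, rfl, rfl⟩ := hgen k x hx
  obtain ⟨j, rfl, rfl⟩ := hgen l y hy
  have hi : i ≠ 0 := right_ne_zero_of_mul hk
  have hj : j ≠ 0 := right_ne_zero_of_mul hl
  obtain ⟨i', j', hcop, hi', hj'⟩ := Nat.exists_coprime i j
  set d := Nat.gcd i j
  have hd : d ≠ 0 := by rintro h; exact hi (by rw [hi', h, mul_zero])
  have hδ := hγ.pow d
  have hgd : g * d ≠ 0 := mul_ne_zero hg hd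
  rw [hi', mul_comm i', pow_mul] at hxtr
  rw [hj', mul_comm j', pow_mul] at hytr
  have htr : trace (γ ^ d) = 1 := by
    rcases Nat.even_or_odd i' with he | ho
    · rcases Nat.even_or_odd j' with he' | ho'
      · exact absurd (Nat.dvd_gcd he.two_dvd he'.two_dvd) (by rw [hcop]; decide)
      · exact hδ.trace_eq_one_of_odd hodd hgd ho' hytr
    · exact hδ.trace_eq_one_of_odd hodd hgd ho hxtr
  have hi1 : i' = 1 := hδ.eq_one_of_trace_pow_eq_one hodd hgd
    (by rintro rfl; simp at hi'; exact hi hi') htr hxtr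
  have hj1 : j' = 1 := hδ.eq_one_of_trace_pow_eq_one hodd hgd
    (by rintro rfl; simp at hj'; exact hj hj') htr hytr
  rw [hi', hj', hi1, hj1]

end IsPrincipalPower

/-- An embedding of the quadratic order in `ℤ_[p]`, coming from a root of
`X ^ 2 - X + p ^ n`. -/
theorem exists_ringHom_padicInt {A t : ℤ} {n : ℕ} (hn : n ≠ 0)
    (h : 1 - 4 * (p : ℤ) ^ n = (4 * A + 1) * (2 * t + 1) ^ 2) :
    Nonempty (QuadraticAlgebra ℤ A 1 →+* ℤ_[p]) := by
  obtain ⟨r, hr⟩ := PadicInt.exists_mul_one_sub_eq (dvd_pow_self (p : ℤ_[p]) hn)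
  have hb : IsUnit ((2 * t + 1 : ℤ) : ℤ_[p]) := by
    by_contra hb
    rw [PadicInt.not_isUnit_iff, PadicInt.norm_int_lt_one_iff_dvd] at hb
    have h1 : (p : ℤ) ∣ 1 := by
      have h2 : (p : ℤ) ∣ 1 - 4 * (p : ℤ) ^ n := by
        rw [h]
        exact (dvd_pow hb two_ne_zero).mul_left _
      simpa using dvd_add h2 ((dvd_pow_self (p : ℤ) hn).mul_left 4)
    exact (Nat.prime_iff_prime_int.1 Fact.out).not_dvd_one h1
  obtain ⟨b, hb'⟩ := hb
  have hinv : ((2 * t + 1 : ℤ) : ℤ_[p]) * ↑b⁻¹ = 1 := by rw [← hb']; exact b.mul_inv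
  have hZ : (1 : ℤ_[p]) - 4 * (p : ℤ_[p]) ^ n = (4 * A + 1) * ((2 * t + 1 : ℤ) : ℤ_[p]) ^ 2 := by
    exact_mod_cast congrArg (Int.cast : ℤ → ℤ_[p]) h
  set w : ℤ_[p] := (r + t) * ↑b⁻¹ with hw
  have hbw : ((2 * t + 1 : ℤ) : ℤ_[p]) * w = r + t := by
    rw [hw]; linear_combination (r + t) * hinv
  have hroot : w * w = A • (1 : ℤ_[p]) + (1 : ℤ) • w := by
    rw [zsmul_eq_mul, zsmul_eq_mul, Int.cast_one, mul_one, one_mul]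
    have hb0 : (4 * ((2 * t + 1 : ℤ) : ℤ_[p]) ^ 2) ≠ 0 := by
      rw [← hb']
      exact mul_ne_zero (by norm_num) (pow_ne_zero _ b.ne_zero)
    apply mul_left_cancel₀ hb0
    generalize hB : ((2 * t + 1 : ℤ) : ℤ_[p]) = B at hbw hZ
    have ht : B = 2 * t + 1 := by rw [← hB]; push_cast; ring
    have e1 : 2 * (B * w) - B = 2 * r - 1 := by rw [hbw, ht]; ring
    linear_combination (2 * (B * w) - B + (2 * r - 1)) * e1 + hZ - 4 * hr
  exact ⟨(lift ⟨w, hroot⟩ : QuadraticAlgebra ℤ A 1 →ₐ[ℤ] ℤ_[p])⟩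

/-- Up to conjugation, `(1 + a√D) / 2` with `D = 4 * A + 1` and `a = 2 * t + 1` odd maps to an
element congruent to `1` modulo `p`. -/
theorem exists_isPrincipalPower (Φ : QuadraticAlgebra ℤ A 1 →+* ℤ_[p]) {t : ℤ} {n : ℕ}
    (hn : n ≠ 0) (h : 1 - 4 * (p : ℤ) ^ n = (4 * A + 1) * (2 * t + 1) ^ 2) :
    ∃ x, IsPrincipalPower Φ n x ∧ trace x = 1 := by
  set x : QuadraticAlgebra ℤ A 1 := ⟨-t, 2 * t + 1⟩
  have htr : trace x = 1 := by simp [x, trace_def]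
  have hnorm : norm x = (p : ℤ) ^ n := by
    rw [norm_def]
    simp only [x]
    linarith
  have hadd : Φ x + Φ (star x) = 1 := by rw [map_add_map_star, htr, Int.cast_one]
  have hmul : Φ x * Φ (star x) = (p : ℤ_[p]) ^ n := by
    rw [← map_mul, ← algebraMap_norm_eq_mul_star, hnorm]
    simp
  rcases PadicInt.prime_p.dvd_or_dvd (hmul ▸ dvd_pow_self (p : ℤ_[p]) hn) with h1 | h1
  · refine ⟨star x, ⟨by rw [QuadraticAlgebra.norm_star, hnorm], ?_⟩, by rw [trace_star, htr]⟩
    rw [← dvd_neg]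
    convert h1 using 1
    linear_combination -hadd
  · refine ⟨x, ⟨hnorm, ?_⟩, htr⟩
    rw [← dvd_neg]
    convert h1 using 1
    linear_combination -hadd

end

/-- For an odd prime `p`, the exponents `m` for which `1 - 4 * p ^ m` lies in a given square class
are unique. -/
theorem eq_of_one_sub_four_mul_prime_pow {p : ℕ} (hp : p.Prime) (hodd : Odd p) {D a b : ℤ}
    {m n : ℕ} (hm : m ≠ 0) (hn : n ≠ 0) (ha : 1 - 4 * (p : ℤ) ^ m = D * a ^ 2)
    (hb : 1 - 4 * (p : ℤ) ^ n = D * b ^ 2) : m = n := by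
  have : Fact p.Prime := ⟨hp⟩
  have odd_of {c : ℤ} {k : ℕ} (hc : 1 - 4 * (p : ℤ) ^ k = D * c ^ 2) : Odd c := by
    by_contra h
    obtain ⟨e, rfl⟩ := Int.not_odd_iff_even.1 h
    have : D * (e + e) ^ 2 = 4 * (D * e ^ 2) := by ring
    omega
  obtain ⟨t, rfl⟩ := odd_of ha
  obtain ⟨s, rfl⟩ := odd_of hb
  obtain ⟨A, rfl⟩ : ∃ A, D = 4 * A + 1 := by
    refine ⟨-(p : ℤ) ^ m - D * t ^ 2 - D * t, ?_⟩
    linear_combination -ha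
  have hneg : A < 0 := by
    have hpos : (0 : ℤ) < (p : ℤ) ^ m := by have := hp.pos; positivity
    by_contra hA
    have : 0 ≤ (4 * A + 1) * (2 * t + 1) ^ 2 := by have := not_lt.1 hA; positivity
    omega
  have hA : ¬ (p : ℤ) ∣ 4 * A + 1 := by
    intro h
    have h2 : (p : ℤ) ∣ 1 - 4 * (p : ℤ) ^ m := by
      rw [ha]
      exact h.mul_right _
    have h1 : (p : ℤ) ∣ 1 := by
      simpa using dvd_add h2 ((dvd_pow_self (p : ℤ) hm).mul_left 4)
    exact (Nat.prime_iff_prime_int.1 hp).not_dvd_one h1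
  obtain ⟨Φ⟩ := exists_ringHom_padicInt hm ha
  obtain ⟨x, hx, hxtr⟩ := exists_isPrincipalPower Φ hm ha
  obtain ⟨y, hy, hytr⟩ := exists_isPrincipalPower Φ hn hb
  exact hx.exponent_unique hodd hneg hA hm hn hy hxtr hytr

end

/-- Let `p` be an odd prime number. If `n1` and `n2` are integers greater than `8` such that
`ℚ(√(1 − 4p^n1)) = ℚ(√(1 − 4p^n2))`, then `n1 = n2`. -/
theorem stmt_2 (p : ℕ) (hp : p.Prime) (hodd : Odd p)
    (n1 n2 : ℕ) (h1 : 8 < n1) (h2 : 8 < n2)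
    (z1 z2 : ℂ) (hz1 : z1 ^ 2 = 1 - 4 * (p : ℂ) ^ n1) (hz2 : z2 ^ 2 = 1 - 4 * (p : ℂ) ^ n2)
    (heq : IntermediateField.adjoin ℚ {z1} = IntermediateField.adjoin ℚ {z2}) :
    n1 = n2 := by
  have hneg (n : ℕ) : 1 - 4 * (p : ℤ) ^ n < 0 := by
    have : (0 : ℤ) < (p : ℤ) ^ n := by have := hp.pos; positivity
    omega
  obtain ⟨D, a, b, ha, hb⟩ := exists_common_mul_sq (hneg n1) (hneg n2)
    (by rw [hz1]; push_cast; ring) (by rw [hz2]; push_cast; ring)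
    (heq ▸ IntermediateField.mem_adjoin_simple_self ℚ z2)
  exact eq_of_one_sub_four_mul_prime_pow hp hodd (by omega) (by omega) ha hb
end

section
/- Let p = 3. If n1 and n2 are positive odd integers with n1 ≠ 5 and n2 ≠ 5 such that ℚ(√(1 − 3^{n1})) = ℚ(√(1 − 3^{n2})) (equivalently, the squarefree parts of 1 − 3^{n1} and 1 − 3^{n2} coincide), then n1 = n2. -/
/-- One step of the recurrence `r (n + 2) = 2 * r (n + 1) - 3 * r n` modulo `729 * 3889`, acting on
pairs of consecutive terms. -/
def recStep (x : ℕ × ℕ) : ℕ × ℕ := (x.2, (2 * x.2 + 2835078 * x.1) % 2835081)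

/-- Whether none of the first `k` iterates of `recStep` from `x` has first entry `1`. -/
def avoidsOne : ℕ → ℕ × ℕ → Bool
  | 0, _ => true
  | k + 1, x => x.1 != 1 && avoidsOne k (recStep x)

lemma ne_one_of_avoidsOne {K : ℕ} {x : ℕ × ℕ} (h : avoidsOne K x = true) {k : ℕ} (hk : k < K) :
    (recStep^[k] x).1 ≠ 1 := by
  induction K generalizing x k with
  | zero => omega
  | succ K ih =>
    simp only [avoidsOne, Bool.and_eq_true, bne_iff_ne] at h
    cases k with
    | zero => simpa using h.1
    | succ k => simpa [Function.iterate_succ_apply] using ih h.2 (by omega : k < K)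

lemma isPeriodicPt_recStep : Function.IsPeriodicPt recStep 972 (23, 43) := by
  unfold Function.IsPeriodicPt Function.IsFixedPt
  decide +kernel

lemma recStep_iterate_ne_one (k : ℕ) : (recStep^[k] (23, 43)).1 ≠ 1 := by
  have h : avoidsOne 972 (23, 43) = true := by decide +kernel
  rw [← isPeriodicPt_recStep.iterate_mod_apply]
  exact ne_one_of_avoidsOne h (Nat.mod_lt _ (by norm_num))

lemma recurrence_ne_one {r : ℕ → ℤ} (h0 : r 0 = 1) (h1 : r 1 = 1)
    (h : ∀ n, r (n + 2) = 2 * r (n + 1) - 3 * r n) {m : ℕ} (hm : 6 ≤ m) : r m ≠ 1 := by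
  obtain ⟨k, rfl⟩ := Nat.exists_eq_add_of_le hm
  have key : ∀ k, r (6 + k) % 2835081 = (recStep^[k] (23, 43)).1 ∧
      r (7 + k) % 2835081 = (recStep^[k] (23, 43)).2 := by
    intro k
    induction k with
    | zero =>
      have e2 := h 0
      have e3 := h 1
      have e4 := h 2
      have e5 := h 3
      have e6 := h 4
      have e7 := h 5
      norm_num at *
      omega
    | succ k ih =>
      rw [Function.iterate_succ_apply']
      have e := h (6 + k)
      rw [show 6 + k + 2 = 7 + (k + 1) by ring, show 6 + k + 1 = 7 + k by ring] at e
      simp only [recStep, show 6 + (k + 1) = 7 + k by ring]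
      push_cast
      refine ⟨ih.2, ?_⟩
      omega
  intro hr
  have := (key k).1
  rw [hr] at this
  have := recStep_iterate_ne_one k
  omega

lemma choose_two_lt_five_pow (i : ℕ) : (2 * (i + 3)).choose 2 < 5 ^ (i + 2) := by
  have e : ∀ i : ℕ, (2 * (i + 3)).choose 2 = (i + 3) * (2 * i + 5) := by
    intro i
    rw [Nat.choose_two_right, show 2 * (i + 3) - 1 = 2 * i + 5 by omega]
    rw [show 2 * (i + 3) * (2 * i + 5) = 2 * ((i + 3) * (2 * i + 5)) by ring]
    simp
  rw [e]
  induction i with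
  | zero => norm_num
  | succ i ih => rw [pow_succ]; nlinarith

lemma not_pow_dvd_choose_two {p : ℕ} (hp : p.Prime) (h5 : 5 ≤ p) {k j : ℕ} (hk : 2 ≤ k)
    (hj : p ^ j ∣ (2 * k).choose 2) : j + 2 ≤ k := by
  by_contra! hlt
  have hdvd : p ^ (k - 1) ∣ (2 * k).choose 2 := (pow_dvd_pow p (by omega)).trans hj
  obtain rfl | h3 := eq_or_lt_of_le hk
  · have h6 : p ∣ 2 * 3 := by simpa [Nat.choose] using hdvd
    rcases (hp.dvd_mul).1 h6 with h | h <;> have := Nat.le_of_dvd (by norm_num) h <;> omega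
  · obtain ⟨i, rfl⟩ := Nat.exists_eq_add_of_le' (show 3 ≤ k from h3)
    have hle := Nat.le_of_dvd (Nat.choose_pos (by omega)) hdvd
    have := choose_two_lt_five_pow i
    have := Nat.pow_le_pow_left h5 (i + 2)
    simp only [show i + 3 - 1 = i + 2 by omega] at hle
    omega

lemma sum_choose_ne_one {p : ℕ} (hp : p.Prime) (h5 : 5 ≤ p) {D : ℤ} (hD : D ≠ 0)
    (hpD : (p : ℤ) ∣ D) {m : ℕ} (hm : 2 ≤ m) :
    ∑ k ∈ Finset.range (m + 1), (m.choose (2 * k) : ℤ) * D ^ k ≠ 1 := by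
  intro hsum
  have hpi : Prime (p : ℤ) := Nat.prime_iff_prime_int.1 hp
  have hT : (m.choose 2 : ℤ) * D ≠ 0 :=
    mul_ne_zero (by exact_mod_cast (Nat.choose_pos hm).ne') hD
  obtain ⟨c, hc, hpc⟩ :=
    (Int.finiteMultiplicity_iff.2 ⟨by simpa using hp.ne_one, hT⟩ :
      FiniteMultiplicity (p : ℤ) _).exists_eq_pow_mul_and_not_dvd
  set v := multiplicity (p : ℤ) ((m.choose 2 : ℤ) * D)
  have hterm : ∀ k, 2 ≤ k → (p : ℤ) ^ (v + 1) ∣ (m.choose (2 * k) : ℤ) * D ^ k := by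
    intro k hk
    by_cases hkm : 2 * k ≤ m
    swap
    · simp [Nat.choose_eq_zero_of_lt (not_le.1 hkm)]
    have hN : (2 * k).choose 2 ≠ 0 := (Nat.choose_pos (by omega)).ne'
    obtain ⟨w, hw, hpw⟩ :=
      (Nat.finiteMultiplicity_iff.2 ⟨hp.ne_one, Nat.pos_of_ne_zero hN⟩ :
        FiniteMultiplicity p _).exists_eq_pow_mul_and_not_dvd
    set j := multiplicity p ((2 * k).choose 2)
    have hj : j + 2 ≤ k := not_pow_dvd_choose_two hp h5 hk ⟨w, hw⟩
    have hmul : (m.choose (2 * k) : ℤ) * (2 * k).choose 2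
        = m.choose 2 * (m - 2).choose (2 * k - 2) := by
      exact_mod_cast Nat.choose_mul (n := m) (k := 2 * k) (s := 2) (by omega)
    clear_value j
    obtain ⟨E, hE⟩ := hpD
    obtain ⟨l, rfl⟩ := Nat.exists_eq_add_of_le' hj
    have hEq : (p : ℤ) ^ j * (w * ((m.choose (2 * (l + (j + 2))) : ℤ) * D ^ (l + (j + 2))))
        = (p : ℤ) ^ j * ((p : ℤ) ^ (v + 1) *
          (c * (m - 2).choose (2 * (l + (j + 2)) - 2) * p ^ l * E ^ (l + j + 1))) := by
      have hw' : ((2 * (l + (j + 2))).choose 2 : ℤ) = p ^ j * w := by exact_mod_cast hw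
      calc _ = (m.choose (2 * (l + (j + 2))) : ℤ) * (p ^ j * w) * D ^ (l + (j + 2)) := by ring
        _ = (m.choose 2 * D) * (m - 2).choose (2 * (l + (j + 2)) - 2) * D ^ (l + j + 1) := by
          rw [← hw', hmul]; ring
        _ = _ := by rw [hc, hE]; ring
    have hEq' := mul_left_cancel₀ (pow_ne_zero j hpi.ne_zero) hEq
    refine hpi.pow_dvd_of_dvd_mul_left _ ?_ (Dvd.intro _ hEq'.symm)
    exact_mod_cast hpw
  obtain ⟨i, rfl⟩ := Nat.exists_eq_add_of_le' hm
  rw [Finset.sum_range_succ', Finset.sum_range_succ'] at hsum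
  have hrest : (p : ℤ) ^ (v + 1) ∣ ∑ k ∈ Finset.range (i + 1),
      ((i + 2).choose (2 * (k + 1 + 1)) : ℤ) * D ^ (k + 1 + 1) :=
    Finset.dvd_sum fun k _ => hterm _ (by omega)
  have hdvd : (p : ℤ) ^ v * p ∣ p ^ v * c := by
    rw [← pow_succ, ← hc]
    have e : ((i + 2).choose 2 : ℤ) * D = -∑ k ∈ Finset.range (i + 1),
      ((i + 2).choose (2 * (k + 1 + 1)) : ℤ) * D ^ (k + 1 + 1) := by
      simp at hsum
      linarith
    rw [e]
    exact hrest.neg_right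
  exact hpc (Int.dvd_of_mul_dvd_mul_left (pow_ne_zero v hpi.ne_zero) hdvd)

lemma exists_prime_dvd_three_pow_sub_one (t : ℕ) :
    ∃ p : ℕ, p.Prime ∧ 5 ≤ p ∧ (p : ℤ) ∣ 3 ^ (2 * (t + 1) + 1) - 1 := by
  have h9 : 9 ^ t % 8 = 1 := by simp [Nat.pow_mod]
  have hpow : 3 ^ (2 * (t + 1) + 1) = 27 * 9 ^ t := by
    rw [show 2 * (t + 1) + 1 = 2 * t + 3 by ring, pow_add, pow_mul]
    norm_num [mul_comm]
  obtain ⟨w, hw⟩ : ∃ w, 27 * 9 ^ t = 2 * w + 1 := ⟨(27 * 9 ^ t - 1) / 2, by omega⟩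
  have hw1 : w ≠ 1 := by omega
  have hp := Nat.minFac_prime hw1
  have hdvd := Nat.minFac_dvd w
  refine ⟨w.minFac, hp, ?_, ?_⟩
  · by_contra! hlt
    have h2 := hp.two_le
    generalize w.minFac = p at hp hdvd hlt h2
    interval_cases p
    · omega
    · omega
    · exact absurd hp (by norm_num)
  · have e : (3 : ℤ) ^ (2 * (t + 1) + 1) - 1 = w * 2 := by
      have : (3 : ℤ) ^ (2 * (t + 1) + 1) = 2 * w + 1 := by exact_mod_cast hpow.trans hw
      rw [this]
      ring
    rw [e]
    exact (Int.natCast_dvd_natCast.2 hdvd).mul_right 2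

namespace Zsqrtd

lemma re_im_pow_one_mk {e b : ℤ} (m N : ℕ) (hN : m + 1 ≤ N) :
    ((⟨1, b⟩ : ℤ√e) ^ m).re = ∑ k ∈ Finset.range N, (m.choose (2 * k) : ℤ) * (e * b ^ 2) ^ k ∧
    ((⟨1, b⟩ : ℤ√e) ^ m).im =
      b * ∑ k ∈ Finset.range N, (m.choose (2 * k + 1) : ℤ) * (e * b ^ 2) ^ k := by
  induction m generalizing N with
  | zero =>
    obtain ⟨N, rfl⟩ := Nat.exists_eq_add_of_le' hN
    constructor <;> simp [Finset.sum_range_succ', Nat.choose_zero_succ, mul_add]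
  | succ m ih =>
    obtain ⟨n, rfl⟩ := Nat.exists_eq_succ_of_ne_zero (show N ≠ 0 by omega)
    rw [Nat.succ_eq_add_one] at hN ⊢
    rw [pow_succ, re_mul, im_mul, (ih (n + 1) (by omega)).1]
    constructor
    · have e1 : ∀ k, (m.choose (2 * k + 1) : ℤ) * (e * b ^ 2) ^ (k + 1)
          = e * b ^ 2 * ((m.choose (2 * k + 1) : ℤ) * (e * b ^ 2) ^ k) := fun k => by ring
      rw [(ih n (by omega)).2, Finset.sum_range_succ' _ n, Finset.sum_range_succ' _ n]
      simp only [mul_add, mul_one, mul_zero, Nat.choose_succ_succ', Nat.cast_add, add_mul,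
        Finset.sum_add_distrib, Nat.choose_zero_right, e1, ← Finset.mul_sum]
      ring
    · rw [(ih (n + 1) (by omega)).2]
      simp only [Nat.choose_succ_succ', Nat.cast_add, add_mul, Finset.sum_add_distrib]
      ring

lemma re_dvd_re_pow_odd {e : ℤ} (z : ℤ√e) (j : ℕ) : z.re ∣ (z ^ (2 * j + 1)).re := by
  induction j with
  | zero => simp
  | succ j ih =>
    rw [show 2 * (j + 1) + 1 = 2 * j + 1 + 2 by ring, pow_add, pow_two, re_mul]
    refine dvd_add (ih.mul_right _) ?_
    rw [im_mul]
    exact ⟨e * (z ^ (2 * j + 1)).im * (2 * z.im), by ring⟩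

lemma re_pow_add_two {e b : ℤ} {s : ℕ} (h : (⟨1, b⟩ : ℤ√e).norm = 3 ^ s) (n : ℕ) :
    ((⟨1, b⟩ : ℤ√e) ^ (n + 2)).re
      = 2 * ((⟨1, b⟩ : ℤ√e) ^ (n + 1)).re - 3 ^ s * ((⟨1, b⟩ : ℤ√e) ^ n).re := by
  rw [← h, pow_succ, pow_succ, norm_def]
  simp only [re_mul, im_mul]
  ring

lemma re_pow_mod_three {e b : ℤ} {s : ℕ} (hs : s ≠ 0) (h : (⟨1, b⟩ : ℤ√e).norm = 3 ^ s) (j : ℕ) :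
    ((⟨1, b⟩ : ℤ√e) ^ (2 * j + 1)).re % 3 = 1 := by
  obtain ⟨t, rfl⟩ := Nat.exists_eq_succ_of_ne_zero hs
  have hp : ∀ c : ℤ, 3 ^ t.succ * c = 3 * (3 ^ t * c) := fun c => by rw [pow_succ]; ring
  induction j with
  | zero => simp
  | succ j ih =>
    have e1 := re_pow_add_two h (2 * j)
    have e2 := re_pow_add_two h (2 * j + 1)
    rw [hp] at e1 e2
    rw [show 2 * (j + 1) + 1 = 2 * j + 1 + 2 by ring]
    rw [show 2 * j + 1 + 1 = 2 * j + 2 by ring] at e2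
    omega

lemma exponent_of_re_pow {d b : ℤ} {s k : ℕ} (hs : Odd s) (hk : Odd k)
    (h : (⟨1, b⟩ : ℤ√(-d)).norm = 3 ^ s)
    (hre : ((⟨1, b⟩ : ℤ√(-d)) ^ k).re = 1 ∨ ((⟨1, b⟩ : ℤ√(-d)) ^ k).re = -1) :
    k = 1 ∨ s = 1 ∧ k = 5 := by
  have hmod : ((⟨1, b⟩ : ℤ√(-d)) ^ k).re % 3 = 1 := by
    obtain ⟨j, rfl⟩ := hk
    exact re_pow_mod_three hs.pos.ne' h j
  replace hre : ((⟨1, b⟩ : ℤ√(-d)) ^ k).re = 1 := by omega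
  by_cases hk1 : k = 1
  · exact Or.inl hk1
  obtain ⟨t, rfl⟩ := hs
  rcases t with _ | t
  · right
    have hk6 : k < 6 := by
      by_contra! hk6
      exact recurrence_ne_one (r := fun n => ((⟨1, b⟩ : ℤ√(-d)) ^ n).re) (by simp) (by simp)
        (fun n => by simpa using re_pow_add_two h n) hk6 hre
    have e1 := re_pow_add_two h 0
    have e2 := re_pow_add_two h 1
    rcases hk with ⟨j, rfl⟩
    have hj : j < 3 := by omega
    interval_cases j
    · simp at hk1
    · norm_num at e1 e2 hre
      omega
    · simp
  · exfalso
    obtain ⟨p, hp, h5, hpd⟩ := exists_prime_dvd_three_pow_sub_one t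
    have hD : -d * b ^ 2 = -(3 ^ (2 * (t + 1) + 1) - 1) := by
      rw [← h, norm_def]
      ring
    have h3 : (1 : ℤ) < 3 ^ (2 * (t + 1) + 1) := one_lt_pow₀ (by norm_num) (by omega)
    have hk2 : 2 ≤ k := by have := hk.pos; omega
    refine sum_choose_ne_one hp h5 (D := -d * b ^ 2) (by omega) ?_ hk2 ?_
    · rw [hD]
      exact hpd.neg_right
    · rw [← (re_im_pow_one_mk k (k + 1) le_rfl).1, hre]

lemma dvd_of_pow_dvd_im {d : ℤ} {x y : ℤ√(-d)} {s : ℕ} (hx : x.norm = 3 ^ s)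
    (hre : ¬ (3 : ℤ) ∣ x.re) (him : (3 : ℤ) ^ s ∣ (star x * y).im) : x ∣ y := by
  have hR : (3 : ℤ) ^ s ∣ (star x * y).re := by
    refine Int.prime_three.pow_dvd_of_dvd_mul_left _ hre ?_
    have e : x.re * (star x * y).re = 3 ^ s * y.re + d * x.im * (star x * y).im := by
      rw [← hx, norm_def]
      simp only [re_mul, im_mul, re_star, im_star]
      ring
    rw [e]
    exact dvd_add (dvd_mul_right _ _) (him.mul_left _)
  obtain ⟨z, hz⟩ := (intCast_dvd ((3 : ℤ) ^ s) (star x * y)).2 ⟨hR, him⟩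
  refine ⟨z, Zsqrtd.eq_of_smul_eq_smul_left (a := 3 ^ s) (by positivity) ?_⟩
  calc (((3 : ℤ) ^ s : ℤ) : ℤ√(-d)) * y = x * (star x * y) := by
        rw [← mul_assoc, ← norm_eq_mul_conj, hx]
    _ = _ := by rw [hz]; ring

lemma three_not_dvd_re_im {d : ℤ} (hd : ¬ (3 : ℤ) ∣ d) {x : ℤ√(-d)} {s : ℕ} (hs : s ≠ 0)
    (hx : x.norm = 3 ^ s) (h3 : ¬ ((3 : ℤ) : ℤ√(-d)) ∣ x) :
    ¬ (3 : ℤ) ∣ x.re ∧ ¬ (3 : ℤ) ∣ x.im := by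
  have h : x.re * x.re + d * (x.im * x.im) = 3 ^ s := by rw [← hx, norm_def]; ring
  have hdvd : (3 : ℤ) ∣ x.re * x.re + d * (x.im * x.im) := h ▸ dvd_pow_self _ hs
  have hp := Int.prime_three
  rw [intCast_dvd] at h3
  constructor
  · intro hr
    have := (hp.dvd_or_dvd ((dvd_add_right (hr.mul_right _)).1 hdvd)).resolve_left hd
    exact h3 ⟨hr, (or_self_iff.1 (hp.dvd_or_dvd this))⟩
  · intro hi
    have := (dvd_add_left ((hi.mul_right x.im).mul_left d)).1 hdvd
    exact h3 ⟨or_self_iff.1 (hp.dvd_or_dvd this), hi⟩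

lemma dvd_or_star_dvd {d : ℤ} (hd : ¬ (3 : ℤ) ∣ d) {x y : ℤ√(-d)} {s n : ℕ} (hs : s ≠ 0)
    (hsn : s ≤ n) (hx : x.norm = 3 ^ s) (hy : y.norm = 3 ^ n) (hx3 : ¬ ((3 : ℤ) : ℤ√(-d)) ∣ x)
    (hy3 : ¬ ((3 : ℤ) : ℤ√(-d)) ∣ y) : x ∣ y ∨ star x ∣ y := by
  obtain ⟨hxr, hxi⟩ := three_not_dvd_re_im hd hs hx hx3
  obtain ⟨hyr, hyi⟩ := three_not_dvd_re_im hd (by omega) hy hy3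
  have hp := Int.prime_three
  have hprod : (3 : ℤ) ^ s ∣ (star x * y).im * (x * y).im := by
    have e : (star x * y).im * (x * y).im = x.norm * y.im ^ 2 - y.norm * x.im ^ 2 := by
      simp only [im_mul, re_star, im_star, norm_def]
      ring
    rw [e, hx, hy]
    exact dvd_sub (dvd_mul_right _ _) ((pow_dvd_pow 3 hsn).mul_right _)
  by_cases h : (3 : ℤ) ∣ (star x * y).im
  · left
    refine dvd_of_pow_dvd_im hx hxr (hp.pow_dvd_of_dvd_mul_right _ (fun h' => ?_) hprod)
    have e : (star x * y).im + (x * y).im = 2 * (x.re * y.im) := by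
      simp only [im_mul, re_star, im_star]
      ring
    rcases hp.dvd_or_dvd (e ▸ dvd_add h h') with h2 | h2
    · omega
    · exact (hp.dvd_or_dvd h2).elim hxr hyi
  · right
    refine dvd_of_pow_dvd_im (by rwa [norm_conj]) (by simpa using hxr) ?_
    rw [star_star]
    exact hp.pow_dvd_of_dvd_mul_left _ h hprod

lemma eq_unit_mul_pow {d : ℤ} (hd2 : 2 ≤ d) (hd : ¬ (3 : ℤ) ∣ d) {x : ℤ√(-d)} {s : ℕ} (hs : s ≠ 0)
    (hx : x.norm = 3 ^ s) (hx3 : ¬ ((3 : ℤ) : ℤ√(-d)) ∣ x)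
    (hmin : ∀ t, t ≠ 0 → t < s → ∀ y : ℤ√(-d), y.norm = 3 ^ t → ((3 : ℤ) : ℤ√(-d)) ∣ y)
    (n : ℕ) (y : ℤ√(-d)) (hy : y.norm = 3 ^ n) (hy3 : ¬ ((3 : ℤ) : ℤ√(-d)) ∣ y) :
    ∃ k, n = s * k ∧ ∃ u : ℤ√(-d), (u = 1 ∨ u = -1) ∧ (y = u * x ^ k ∨ y = u * star x ^ k) := by
  induction n using Nat.strong_induction_on generalizing y with
  | _ n ih =>
  rcases Nat.eq_zero_or_pos n with rfl | hn
  · refine ⟨0, by simp, y, ?_, by simp⟩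
    have h : y.re * y.re + d * (y.im * y.im) = 1 := by rw [norm_def] at hy; linarith
    have hi : y.im = 0 := by
      by_contra hne
      have : 1 ≤ y.im * y.im := (mul_self_pos.2 hne : 0 < y.im * y.im)
      nlinarith [mul_self_nonneg y.re]
    rw [hi] at h
    rcases mul_self_eq_one_iff.1 (by simpa using h) with hr | hr
    · left; ext <;> simp [hr, hi]
    · right; ext <;> simp [hr, hi]
  by_cases hns : n < s
  · exact absurd (hmin n hn.ne' hns y hy) hy3
  rw [not_lt] at hns
  have hquot : ∀ w z : ℤ√(-d), w.norm = 3 ^ s → y = w * z →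
      z.norm = 3 ^ (n - s) ∧ ¬ ((3 : ℤ) : ℤ√(-d)) ∣ z := by
    rintro w z hw rfl
    refine ⟨?_, fun h => hy3 (h.mul_left _)⟩
    rw [norm_mul, hw] at hy
    obtain ⟨t, rfl⟩ := Nat.exists_eq_add_of_le hns
    rw [pow_add] at hy
    simpa using hy
  have hxx : ((3 : ℤ) : ℤ√(-d)) ∣ x * star x := by
    rw [← norm_eq_mul_conj, hx, intCast_dvd_intCast]
    exact dvd_pow_self _ hs
  have hmixed : ∀ u : ℤ√(-d), ∀ w w' : ℤ√(-d), ((3 : ℤ) : ℤ√(-d)) ∣ w * w' → ∀ k,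
      y = w * (u * w' ^ k) → k = 0 := by
    intro u w w' hw k hyk
    by_contra hk
    obtain ⟨k, rfl⟩ := Nat.exists_eq_succ_of_ne_zero hk
    apply hy3
    rw [hyk, pow_succ, show w * (u * (w' ^ k * w')) = w * w' * (u * w' ^ k) by ring]
    exact hw.mul_right _
  rcases dvd_or_star_dvd hd hs hns hx hy hx3 hy3 with ⟨z, hz⟩ | ⟨z, hz⟩
  · obtain ⟨hzn, hz3⟩ := hquot _ z hx hz
    obtain ⟨k, hk, u, hu, h⟩ := ih (n - s) (by omega) z hzn hz3
    refine ⟨k + 1, by rw [mul_add]; omega, u, hu, Or.inl ?_⟩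
    rcases h with h | h
    · rw [hz, h]; ring
    · obtain rfl := hmixed u x (star x) hxx k (h ▸ hz)
      rw [hz, h]; ring
  · obtain ⟨hzn, hz3⟩ := hquot _ z (by rwa [norm_conj]) hz
    obtain ⟨k, hk, u, hu, h⟩ := ih (n - s) (by omega) z hzn hz3
    refine ⟨k + 1, by rw [mul_add]; omega, u, hu, Or.inr ?_⟩
    rcases h with h | h
    · obtain rfl := hmixed u (star x) x (by rwa [mul_comm]) k (h ▸ hz)
      rw [hz, h]; ring
    · rw [hz, h]; ring

lemma eq_or_eq_five_of_re_eq_one {d : ℤ} {x : ℤ√(-d)} {s k : ℕ} (hn : Odd (s * k))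
    (hx : x.norm = 3 ^ s) (hre : (x ^ k).re = 1 ∨ (x ^ k).re = -1) :
    s * k = s ∨ s * k = 5 := by
  obtain ⟨hs, hk⟩ := Nat.odd_mul.1 hn
  have main : ∀ y : ℤ√(-d), y.re = 1 → y.norm = 3 ^ s →
      ((y ^ k).re = 1 ∨ (y ^ k).re = -1) → s * k = s ∨ s * k = 5 := by
    rintro ⟨a, b⟩ rfl hy hyre
    rcases exponent_of_re_pow hs hk hy hyre with rfl | ⟨rfl, rfl⟩ <;> simp
  have hunit : x.re ∣ 1 := by
    obtain ⟨j, rfl⟩ := hk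
    have h := re_dvd_re_pow_odd x j
    rcases hre with e | e <;> rw [e] at h
    · exact h
    · simpa using h
  rcases Int.isUnit_iff.1 (isUnit_of_dvd_one hunit) with h | h
  · exact main x h hx hre
  · refine main (-x) (by simp [h]) (by rwa [norm_neg]) ?_
    rw [hk.neg_pow, re_neg]
    omega

lemma exists_forall_eq_or_eq_five {d : ℤ} (hd2 : 2 ≤ d) {n₀ : ℕ} (hn₀ : n₀ ≠ 0) {y₀ : ℤ}
    (h₀ : 1 + d * y₀ ^ 2 = 3 ^ n₀) :
    ∃ s : ℕ, ∀ n : ℕ, Odd n → ∀ y : ℤ, 1 + d * y ^ 2 = 3 ^ n → n = s ∨ n = 5 := by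
  classical
  have h3d : ¬ (3 : ℤ) ∣ d := by
    intro h
    have h1 : (3 : ℤ) ∣ 1 + d * y₀ ^ 2 := h₀ ▸ dvd_pow_self 3 hn₀
    have := (dvd_add_left (h.mul_right (y₀ ^ 2))).1 h1
    omega
  have hnorm : ∀ (n : ℕ) (y : ℤ), 1 + d * y ^ 2 = 3 ^ n → (⟨1, y⟩ : ℤ√(-d)).norm = 3 ^ n := by
    intro n y h
    rw [← h, norm_def]
    ring
  have hprim : ∀ y : ℤ, ¬ ((3 : ℤ) : ℤ√(-d)) ∣ ⟨1, y⟩ := by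
    intro y h
    rw [intCast_dvd] at h
    have := h.1
    norm_num at this
  have hex : ∃ s : ℕ, s ≠ 0 ∧ ∃ x : ℤ√(-d), x.norm = 3 ^ s ∧ ¬ ((3 : ℤ) : ℤ√(-d)) ∣ x :=
    ⟨n₀, hn₀, ⟨1, y₀⟩, hnorm _ _ h₀, hprim y₀⟩
  obtain ⟨hs, x, hx, hx3⟩ := Nat.find_spec hex
  have hmin : ∀ t, t ≠ 0 → t < Nat.find hex → ∀ y : ℤ√(-d), y.norm = 3 ^ t →
      ((3 : ℤ) : ℤ√(-d)) ∣ y := by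
    intro t ht hts y hy
    by_contra hy3
    exact Nat.find_min hex hts ⟨ht, y, hy, hy3⟩
  refine ⟨Nat.find hex, fun n hn y hy => ?_⟩
  obtain ⟨k, rfl, u, hu, h⟩ := eq_unit_mul_pow hd2 h3d hs hx hx3 hmin n ⟨1, y⟩
    (hnorm n y hy) (hprim y)
  refine eq_or_eq_five_of_re_eq_one hn hx ?_
  have hre : (u * x ^ k).re = 1 := by
    rcases h with h | h
    · rw [← h]
    · have hr := congrArg re h
      rw [← star_pow] at hr
      rcases hu with rfl | rfl <;> simpa [-star_pow] using hr.symm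
  rcases hu with rfl | rfl
  · left; simpa using hre
  · right
    simp at hre
    omega

end Zsqrtd

lemma exists_eq_mul_sq {A B p q : ℤ} (hA : 0 < A) (hB : 0 < B) (hq : q ≠ 0)
    (h : A * q ^ 2 = B * p ^ 2) :
    ∃ a b : ℤ, A = Int.gcd A B * a ^ 2 ∧ B = Int.gcd A B * b ^ 2 := by
  have hg : 0 < Int.gcd A B := Int.gcd_pos_of_ne_zero_left _ hA.ne'
  obtain ⟨a, b, hab, hAa, hBb⟩ := Int.exists_gcd_one hg
  generalize Int.gcd A B = g at hAa hBb hg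
  subst hAa hBb
  have hg' : (0 : ℤ) < g := by exact_mod_cast hg
  have ha : 0 < a := pos_of_mul_pos_left hA hg'.le
  have hb : 0 < b := pos_of_mul_pos_left hB hg'.le
  have hcancel : a * q ^ 2 = b * p ^ 2 := by
    refine mul_left_cancel₀ hg'.ne' ?_
    linear_combination h
  obtain ⟨c, hc⟩ : q ∣ b * p := by
    rw [← Int.pow_dvd_pow_iff two_ne_zero]
    exact ⟨a * b, by linear_combination -b * hcancel⟩
  have habc : a * b = c ^ 2 := by
    refine mul_left_cancel₀ (pow_ne_zero 2 hq) ?_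
    linear_combination b * hcancel + (b * p + q * c) * hc
  have hsq : ∀ x y : ℤ, 0 < x → Int.gcd x y = 1 → x * y = c ^ 2 → ∃ w, x = w ^ 2 := by
    intro x y hx hxy h
    obtain ⟨w, rfl | rfl⟩ := Int.sq_of_gcd_eq_one hxy h
    · exact ⟨w, rfl⟩
    · nlinarith [sq_nonneg w]
  obtain ⟨u, hu⟩ := hsq a b ha hab habc
  obtain ⟨w, hw⟩ := hsq b a hb (by rwa [Int.gcd_comm]) (by rwa [mul_comm])
  exact ⟨u, w, by rw [hu]; ring, by rw [hw]; ring⟩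

lemma exists_rat_of_mem_adjoin {z w : ℂ} {c : ℚ} (hz : z ^ 2 = c) (hc : c < 0)
    (hw : w ∈ IntermediateField.adjoin ℚ {z}) : ∃ a b : ℚ, w = a + b * z := by
  induction hw using IntermediateField.adjoin_induction with
  | mem x hx => exact ⟨0, 1, by simp [Set.mem_singleton_iff.1 hx]⟩
  | algebraMap x => exact ⟨x, 0, by simp⟩
  | add x y _ _ hx hy =>
    obtain ⟨a, b, rfl⟩ := hx
    obtain ⟨a', b', rfl⟩ := hy
    exact ⟨a + a', b + b', by push_cast; ring⟩
  | mul x y _ _ hx hy =>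
    obtain ⟨a, b, rfl⟩ := hx
    obtain ⟨a', b', rfl⟩ := hy
    exact ⟨a * a' + b * b' * c, a * b' + b * a', by push_cast; rw [← hz]; ring⟩
  | inv x _ hx =>
    obtain ⟨a, b, rfl⟩ := hx
    by_cases h0 : a ^ 2 - b ^ 2 * c = 0
    · have ha : a = 0 := by nlinarith [sq_nonneg a, mul_nonneg (sq_nonneg b) (neg_pos.2 hc).le]
      have hb : b = 0 := by
        have : b ^ 2 * c = 0 := by rw [ha] at h0; linarith
        simpa [hc.ne] using this
      exact ⟨0, 0, by simp [ha, hb]⟩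
    · refine ⟨a / (a ^ 2 - b ^ 2 * c), -b / (a ^ 2 - b ^ 2 * c), ?_⟩
      have h0' : (a : ℂ) ^ 2 - b ^ 2 * c ≠ 0 := by exact_mod_cast h0
      apply inv_eq_of_mul_eq_one_right
      push_cast
      field_simp
      rw [← hz]
      ring

lemma exists_rat_sq_mul {z w : ℂ} {c e : ℚ} (hz : z ^ 2 = c) (hc : c < 0) (hw : w ^ 2 = e)
    (he : e < 0) (hmem : w ∈ IntermediateField.adjoin ℚ {z}) : ∃ b : ℚ, e = b ^ 2 * c := by
  obtain ⟨a, b, rfl⟩ := exists_rat_of_mem_adjoin hz hc hmem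
  have hsq : ((2 * a * b : ℚ) : ℂ) * z = ((e - a ^ 2 - b ^ 2 * c : ℚ) : ℂ) := by
    push_cast
    rw [← hw, ← hz]
    ring
  have hab : 2 * a * b = 0 := by
    by_contra hne
    have h2 := congrArg (· ^ 2) hsq
    simp only [mul_pow, hz] at h2
    have h3 : (2 * a * b) ^ 2 * c = (e - a ^ 2 - b ^ 2 * c) ^ 2 := by exact_mod_cast h2
    have : 0 < (2 * a * b) ^ 2 := by positivity
    nlinarith [sq_nonneg (e - a ^ 2 - b ^ 2 * c)]
  rw [hab] at hsq
  have h0 : e - a ^ 2 - b ^ 2 * c = 0 := by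
    have : ((e - a ^ 2 - b ^ 2 * c : ℚ) : ℂ) = 0 := by rw [← hsq]; simp
    exact_mod_cast this
  have hb : b ≠ 0 := by
    rintro rfl
    nlinarith [sq_nonneg a]
  have ha : a = 0 := by simpa [hb] using hab
  exact ⟨b, by rw [ha] at h0; linarith⟩


/-- Let `p = 3`. If `n1` and `n2` are positive odd integers with `n1 ≠ 5` and `n2 ≠ 5`
such that `ℚ(√(1 − 3^n1)) = ℚ(√(1 − 3^n2))`, then `n1 = n2`. -/
theorem stmt_4 (n1 n2 : ℕ) (hpos1 : 0 < n1) (hpos2 : 0 < n2) (ho1 : Odd n1) (ho2 : Odd n2)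
    (hne1 : n1 ≠ 5) (hne2 : n2 ≠ 5)
    (z1 z2 : ℂ) (hz1 : z1 ^ 2 = 1 - (3 : ℂ) ^ n1) (hz2 : z2 ^ 2 = 1 - (3 : ℂ) ^ n2)
    (heq : IntermediateField.adjoin ℚ {z1} = IntermediateField.adjoin ℚ {z2}) :
    n1 = n2 := by
  have hgt : ∀ n : ℕ, 0 < n → (1 : ℤ) < 3 ^ n := fun n hn => one_lt_pow₀ (by norm_num) hn.ne'
  have hneg : ∀ n : ℕ, 0 < n → (1 - 3 ^ n : ℚ) < 0 := fun n hn => by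
    have : (1 : ℚ) < 3 ^ n := by exact_mod_cast hgt n hn
    linarith
  have hmem : z1 ∈ IntermediateField.adjoin ℚ {z2} :=
    heq ▸ IntermediateField.mem_adjoin_simple_self ℚ z1
  obtain ⟨b, hb⟩ := exists_rat_sq_mul (c := 1 - 3 ^ n2) (e := 1 - 3 ^ n1) (by simpa using hz2)
    (hneg _ hpos2) (by simpa using hz1) (hneg _ hpos1) hmem
  have hA := hgt _ hpos1
  have hB := hgt _ hpos2
  obtain ⟨y1, y2, h1, h2⟩ := exists_eq_mul_sq (A := 3 ^ n1 - 1) (B := 3 ^ n2 - 1) (p := b.num)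
    (q := b.den) (by linarith) (by linarith) (by simp) (by
      have hden : (b.den : ℚ) ≠ 0 := by simp
      have : ((3 : ℚ) ^ n1 - 1) * b.den ^ 2 = (3 ^ n2 - 1) * b.num ^ 2 := by
        have e : (b.num : ℚ) = b * b.den := (Rat.mul_den_eq_num b).symm
        rw [e]
        linear_combination -(b.den : ℚ) ^ 2 * hb
      exact_mod_cast this)
  set d : ℤ := ((Int.gcd (3 ^ n1 - 1) (3 ^ n2 - 1) : ℕ) : ℤ)
  have heven : ∀ n : ℕ, (2 : ℤ) ∣ 3 ^ n - 1 := fun n => by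
    simpa using sub_dvd_pow_sub_pow (3 : ℤ) 1 n
  have h2d : (2 : ℤ) ∣ d := Int.dvd_coe_gcd (heven _) (heven _)
  have hd0 : 0 < d := Int.natCast_pos.2 (Int.gcd_pos_of_ne_zero_left _ (by linarith))
  obtain ⟨s, hs⟩ := Zsqrtd.exists_forall_eq_or_eq_five (Int.le_of_dvd hd0 h2d) hpos1.ne'
    (y₀ := y1) (by rw [← h1]; ring)
  have e1 := (hs n1 ho1 y1 (by rw [← h1]; ring)).resolve_right hne1
  have e2 := (hs n2 ho2 y2 (by rw [← h2]; ring)).resolve_right hne2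
  rw [e1, e2]
end

section
/- Let p be a prime with p ≡ 3 (mod 4) and 2^{p−1} ≡ 1 (mod p^2), and let q1 be a prime factor of p − 2 such that q1^{p−1} ≢ 1 (mod p^2). If n1 and n2 are positive odd composite numbers such that ℚ(√(q1^2 − p^{n1})) = ℚ(√(q1^2 − p^{n2})) (equivalently, the squarefree parts of q1^2 − p^{n1} and q1^2 − p^{n2} coincide), then n1 = n2. -/
section

open Finset

/-- The generalized binomial coefficient `(k + 1/2 choose i)`. -/
noncomputable def halfChoose (k i : ℕ) : ℝ :=
  (∏ j ∈ range i, ((k : ℝ) + 1 / 2 - j)) / i.factorial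

/-- The coefficients of the power series of `(1 - z) ^ (-1/2)`. -/
noncomputable def invSqrtCoeff (j : ℕ) : ℝ := (j.centralBinom : ℝ) / 4 ^ j

lemma halfChoose_zero (k : ℕ) : halfChoose k 0 = 1 := by simp [halfChoose]

lemma halfChoose_succ (k i : ℕ) :
    halfChoose k (i + 1) * (i + 1) = halfChoose k i * ((k : ℝ) + 1 / 2 - i) := by
  have h : (i.factorial : ℝ) ≠ 0 := by positivity
  simp only [halfChoose, prod_range_succ, Nat.factorial_succ, Nat.cast_mul, Nat.cast_add,
    Nat.cast_one]
  field_simp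

lemma halfChoose_succ_succ (k i : ℕ) :
    halfChoose (k + 1) (i + 1) = halfChoose k (i + 1) + halfChoose k i := by
  have h : (i.factorial : ℝ) ≠ 0 := by positivity
  have e : ∏ j ∈ range i, (((k + 1 : ℕ) : ℝ) + 1 / 2 - (j + 1 : ℕ)) =
      ∏ j ∈ range i, ((k : ℝ) + 1 / 2 - j) := prod_congr rfl fun j _ ↦ by push_cast; ring
  simp only [halfChoose, Nat.factorial_succ, Nat.cast_mul]
  rw [prod_range_succ', e, prod_range_succ]
  push_cast
  field_simp
  ring

lemma exists_int_four_pow_mul_halfChoose (k i : ℕ) :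
    ∃ u : ℤ, 4 ^ i * halfChoose k i = u := by
  induction k generalizing i with
  | zero =>
    have key : ∀ i : ℕ, 4 ^ (i + 1) * halfChoose 0 (i + 1) * (i + 1) =
        2 * (-1) ^ i * (i.centralBinom : ℝ) := by
      intro i
      induction i with
      | zero => simp [halfChoose]; norm_num
      | succ i ih =>
        have h1 := halfChoose_succ 0 (i + 1)
        have h2 : ((i : ℝ) + 1) * ((i + 1).centralBinom : ℝ) =
            2 * (2 * i + 1) * i.centralBinom := by
          exact_mod_cast Nat.succ_mul_centralBinom_succ i
        have h3 : (i : ℝ) + 1 ≠ 0 := by positivity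
        push_cast at h1 ⊢
        apply mul_left_cancel₀ h3
        calc _ = 4 ^ (i + 1 + 1) * (i + 1) *
              (halfChoose 0 (i + 1 + 1) * ((i : ℝ) + 1 + 1)) := by ring
          _ = -(2 * (2 * i + 1)) * (4 ^ (i + 1) * halfChoose 0 (i + 1) * (i + 1)) := by
              rw [h1]; ring
          _ = 2 * (-1) ^ (i + 1) * (2 * (2 * i + 1) * i.centralBinom) := by rw [ih]; ring
          _ = _ := by rw [← h2]; ring
    cases i with
    | zero => exact ⟨1, by simp [halfChoose_zero]⟩
    | succ i =>
      refine ⟨2 * (-1) ^ i * (catalan i : ℤ), ?_⟩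
      have h3 : (i : ℝ) + 1 ≠ 0 := by positivity
      apply mul_right_cancel₀ h3
      have h4 : ((i : ℝ) + 1) * catalan i = i.centralBinom := by
        exact_mod_cast succ_mul_catalan_eq_centralBinom i
      rw [key, ← h4]
      push_cast
      ring
  | succ k ih =>
    cases i with
    | zero => exact ⟨1, by simp [halfChoose_zero]⟩
    | succ i =>
      obtain ⟨u, hu⟩ := ih (i + 1)
      obtain ⟨v, hv⟩ := ih i
      refine ⟨u + 4 * v, ?_⟩
      rw [halfChoose_succ_succ]
      push_cast
      rw [← hu, ← hv]
      ring

lemma abs_halfChoose_le {k i : ℕ} (h : i ≤ k + 1) :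
    |halfChoose k i| ≤ ((k + 1).choose i : ℝ) := by
  have e : ((k + 1).choose i : ℝ) = (∏ j ∈ range i, ((k : ℝ) + 1 - j)) / i.factorial := by
    rw [eq_div_iff (by positivity), mul_comm, ← Nat.cast_mul,
      ← Nat.descFactorial_eq_factorial_mul_choose,
      Nat.descFactorial_eq_prod_range, Nat.cast_prod]
    refine prod_congr rfl fun j hj ↦ ?_
    rw [mem_range] at hj
    rw [Nat.cast_sub (by omega)]
    push_cast
    ring
  have hj' : ∀ j ∈ range i, (j : ℝ) ≤ k := fun j hj ↦ by
    rw [mem_range] at hj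
    exact_mod_cast (by omega : j ≤ k)
  rw [e, halfChoose, abs_of_nonneg]
  · gcongr with j hj
    · intro j hj; have := hj' j hj; linarith
    · norm_num
  · have : 0 ≤ ∏ j ∈ range i, ((k : ℝ) + 1 / 2 - j) :=
      prod_nonneg fun j hj ↦ by have := hj' j hj; linarith
    positivity

lemma invSqrtCoeff_mul_factorial (j : ℕ) :
    invSqrtCoeff j * j.factorial = ∏ l ∈ range j, ((l : ℝ) + 1 / 2) := by
  induction j with
  | zero => simp [invSqrtCoeff]
  | succ j ih =>
    rw [prod_range_succ, ← ih, invSqrtCoeff, invSqrtCoeff, Nat.factorial_succ]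
    have h2 : ((j : ℝ) + 1) * ((j + 1).centralBinom : ℝ) =
        2 * (2 * j + 1) * j.centralBinom := by
      exact_mod_cast Nat.succ_mul_centralBinom_succ j
    push_cast
    rw [pow_succ]
    field_simp
    linear_combination 2 * h2

lemma invSqrtCoeff_nonneg (j : ℕ) : 0 ≤ invSqrtCoeff j := by
  unfold invSqrtCoeff; positivity

lemma invSqrtCoeff_le_one (j : ℕ) : invSqrtCoeff j ≤ 1 := by
  unfold invSqrtCoeff
  rw [div_le_one (by positivity)]
  have : j.centralBinom ≤ 4 ^ j := by
    rw [Nat.centralBinom]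
    calc _ ≤ 2 ^ (2 * j) := Nat.choose_le_two_pow _ _
      _ = _ := by rw [pow_mul]; norm_num
  exact_mod_cast this

lemma choose_eq_invSqrtCoeff (j : ℕ) :
    Ring.choose ((1 / 2 : ℝ) + j - 1) j = invSqrtCoeff j := by
  have h3 : (j.factorial : ℝ) ≠ 0 := by positivity
  rw [← Ring.multichoose_eq]
  apply mul_left_cancel₀ h3
  rw [← nsmul_eq_mul, Ring.factorial_nsmul_multichoose_eq_ascPochhammer, mul_comm,
    invSqrtCoeff_mul_factorial, Polynomial.ascPochhammer_smeval_eq_eval]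
  clear h3
  induction j with
  | zero => simp
  | succ j ih => rw [ascPochhammer_succ_eval, ih, prod_range_succ]; ring

lemma hasSum_invSqrtCoeff {z : ℝ} (h0 : 0 ≤ z) (h1 : z < 1) :
    HasSum (fun j ↦ invSqrtCoeff j * z ^ j) (1 / √(1 - z)) := by
  have h := (Real.one_div_one_sub_rpow_hasFPowerSeriesOnBall_zero (1 / 2)).hasSum (y := z)
    (by simpa [enorm_eq_nnnorm, Real.nnnorm_of_nonneg h0, ← NNReal.coe_lt_coe] using h1)
  rw [zero_add] at h
  rw [Real.sqrt_eq_rpow]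
  refine h.congr_fun ?_
  intro j
  rw [FormalMultilinearSeries.ofScalars_apply_eq, choose_eq_invSqrtCoeff, smul_eq_mul]

lemma sum_invSqrtCoeff_bounds {z : ℝ} (h0 : 0 ≤ z) (h1 : z < 1) (M : ℕ) :
    0 ≤ 1 / √(1 - z) - ∑ j ∈ range M, invSqrtCoeff j * z ^ j ∧
      1 / √(1 - z) - ∑ j ∈ range M, invSqrtCoeff j * z ^ j ≤ z ^ M / (1 - z) := by
  have h := (hasSum_nat_add_iff' M).2 (hasSum_invSqrtCoeff h0 h1)
  have hg := (hasSum_geometric_of_lt_one h0 h1).mul_left (z ^ M)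
  rw [← div_eq_mul_inv] at hg
  refine ⟨h.nonneg fun j ↦ mul_nonneg (invSqrtCoeff_nonneg _) (by positivity),
    hasSum_le (fun j ↦ ?_) h hg⟩
  calc _ ≤ 1 * z ^ (j + M) := by gcongr; exact invSqrtCoeff_le_one _
    _ = _ := by ring

lemma halfChoose_mul_choose_mul_invSqrtCoeff {i m e r k₁ k₂ : ℕ} (h₁ : k₁ + 1 = i + m)
    (h₂ : k₂ = e + 1 + r) (hi : i ≤ k₂) :
    halfChoose k₁ i * ((m + e + r).choose k₁ : ℝ) * invSqrtCoeff (m + e) =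
      (k₂.choose i : ℝ) * ((∏ l ∈ range (k₁ + 1), ((l : ℝ) + 1 / 2)) /
        (k₁.factorial * k₂.factorial) * (∏ s ∈ range e, ((m : ℝ) + s + 1 / 2)) *
          ∏ s ∈ range r, ((m : ℝ) + e + 1 + s)) := by
  have hhalf : halfChoose k₁ i * i.factorial * ∏ l ∈ range m, ((l : ℝ) + 1 / 2) =
      ∏ l ∈ range (k₁ + 1), ((l : ℝ) + 1 / 2) := by
    rw [halfChoose, div_mul_cancel₀ _ (by positivity), h₁, add_comm i m, prod_range_add, mul_comm]
    congr 1
    rw [← prod_range_reflect]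
    refine prod_congr rfl fun l hl ↦ ?_
    rw [mem_range] at hl
    have : (k₁ : ℝ) + 1 = i + m := by exact_mod_cast h₁
    rw [show i - 1 - l = i - (1 + l) by omega, Nat.cast_sub (by omega)]
    push_cast
    linear_combination this
  have hinv : invSqrtCoeff (m + e) * (m + e).factorial =
      (∏ l ∈ range m, ((l : ℝ) + 1 / 2)) * ∏ s ∈ range e, ((m : ℝ) + s + 1 / 2) := by
    rw [invSqrtCoeff_mul_factorial, prod_range_add]
    push_cast
    rfl
  have hfact : ((m + e + r).factorial : ℝ) =
      (m + e).factorial * ∏ s ∈ range r, ((m : ℝ) + e + 1 + s) := by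
    rw [← Nat.factorial_mul_ascFactorial, Nat.ascFactorial_eq_prod_range]
    push_cast
    rfl
  have hch : ((m + e + r).choose k₁ : ℝ) * k₁.factorial * (k₂ - i).factorial =
      (m + e + r).factorial := by
    rw [show k₂ - i = m + e + r - k₁ by omega]
    exact_mod_cast Nat.choose_mul_factorial_mul_factorial (by omega : k₁ ≤ m + e + r)
  have hch₂ : (k₂.choose i : ℝ) * i.factorial * (k₂ - i).factorial = k₂.factorial := by
    exact_mod_cast Nat.choose_mul_factorial_mul_factorial hi
  have p₁ : (i.factorial : ℝ) ≠ 0 := by positivity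
  have p₂ : ((m + e).factorial : ℝ) ≠ 0 := by positivity
  have p₃ : (k₁.factorial : ℝ) ≠ 0 := by positivity
  have p₄ : (k₂.factorial : ℝ) ≠ 0 := by positivity
  have p₅ : ((k₂ - i).factorial : ℝ) ≠ 0 := by positivity
  have p₆ : ∏ l ∈ range m, ((l : ℝ) + 1 / 2) ≠ 0 := prod_ne_zero_iff.2 fun l _ ↦ by positivity
  rw [hfact] at hch
  rw [← hhalf, ← hch₂]
  have p₇ : (k₂.choose i : ℝ) ≠ 0 := by
    have := Nat.choose_pos hi
    positivity
  have q₁ := eq_div_of_mul_eq p₂ hinv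
  have q₂ : ((m + e + r).choose k₁ : ℝ) =
      (m + e).factorial * (∏ s ∈ range r, ((m : ℝ) + e + 1 + s)) /
        (k₁.factorial * (k₂ - i).factorial) := by
    rw [← hch]; field_simp
  rw [q₁, q₂]
  generalize ∏ l ∈ range m, ((l : ℝ) + 1 / 2) = A at p₆ ⊢
  generalize ∏ s ∈ range e, ((m : ℝ) + s + 1 / 2) = A'
  generalize ∏ s ∈ range r, ((m : ℝ) + e + 1 + s) = A''
  field_simp

lemma sum_neg_one_pow_mul_choose_mul_eval {n : ℕ} {P : Polynomial ℝ} (hP : P.natDegree < n) :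
    ∑ i ∈ range (n + 1), (-1) ^ i * ((n.choose i : ℝ) * P.eval (i : ℝ)) = 0 := by
  have h := congrFun (Polynomial.fwdDiff_iter_eq_zero_of_degree_lt hP) 0
  rw [fwdDiff_iter_eq_sum_shift] at h
  have h' : (-1 : ℝ) ^ n * ∑ k ∈ range (n + 1),
      ((-1 : ℤ) ^ (n - k) * n.choose k) • P.eval (0 + k • (1 : ℝ)) = 0 := by
    rw [h]; simp
  rw [← h', mul_sum]
  refine sum_congr rfl fun i hi ↦ ?_
  rw [mem_range] at hi
  obtain ⟨m, rfl⟩ : ∃ m, n = i + m := ⟨n - i, by omega⟩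
  have : (-1 : ℝ) ^ m * (-1) ^ m = 1 := by rw [← mul_pow]; norm_num
  simp only [add_tsub_cancel_left, zsmul_eq_mul, nsmul_eq_mul, mul_one, zero_add]
  push_cast
  rw [pow_add]
  linear_combination (-(-1 : ℝ) ^ i * ((i + m).choose i : ℝ) * P.eval (i : ℝ)) * this

lemma sum_halfChoose_mul_invSqrtCoeff_eq_zero {e k₁ k₂ : ℕ} (he : e < k₂) (hk : k₂ ≤ k₁) :
    ∑ i ∈ range (k₂ + 1), (-1) ^ i * halfChoose k₁ i * ((k₁ + k₂ - i).choose k₁ : ℝ) *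
      invSqrtCoeff (k₁ + 1 + e - i) = 0 := by
  obtain ⟨r, rfl⟩ : ∃ r, k₂ = e + 1 + r := ⟨k₂ - (e + 1), by omega⟩
  set c : ℝ := (∏ l ∈ range (k₁ + 1), ((l : ℝ) + 1 / 2)) /
        (k₁.factorial * (e + 1 + r).factorial) with hc
  let P : Polynomial ℝ := Polynomial.C c *
    (∏ s ∈ range e, (Polynomial.C ((k₁ : ℝ) + 1 + s + 1 / 2) - Polynomial.X)) *
      ∏ s ∈ range r, (Polynomial.C ((k₁ : ℝ) + 1 + e + 1 + s) - Polynomial.X)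
  have hX : ∀ a : ℝ, (Polynomial.C a - Polynomial.X).natDegree ≤ 1 := fun a ↦ by
    compute_degree
  have hP : P.natDegree < e + 1 + r := by
    have h₁ : (∏ s ∈ range e, (Polynomial.C ((k₁ : ℝ) + 1 + s + 1 / 2) -
        Polynomial.X)).natDegree ≤ e :=
      (Polynomial.natDegree_prod_le _ _).trans
        ((sum_le_sum fun s _ ↦ hX _).trans (by simp))
    have h₂ : (∏ s ∈ range r, (Polynomial.C ((k₁ : ℝ) + 1 + e + 1 + s) -
        Polynomial.X)).natDegree ≤ r :=
      (Polynomial.natDegree_prod_le _ _).trans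
        ((sum_le_sum fun s _ ↦ hX _).trans (by simp))
    have h₃ := Polynomial.natDegree_C_mul_le c
      (∏ s ∈ range e, (Polynomial.C ((k₁ : ℝ) + 1 + s + 1 / 2) - Polynomial.X))
    have h₄ : P.natDegree ≤ _ := Polynomial.natDegree_mul_le
    omega
  rw [← sum_neg_one_pow_mul_choose_mul_eval hP]
  refine sum_congr rfl fun i hi ↦ ?_
  rw [mem_range] at hi
  obtain ⟨m, hm⟩ : ∃ m, k₁ + 1 = i + m := ⟨k₁ + 1 - i, by omega⟩
  have hm' : (k₁ : ℝ) + 1 = i + m := by exact_mod_cast hm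
  have h := halfChoose_mul_choose_mul_invSqrtCoeff hm (rfl : e + 1 + r = e + 1 + r) (by omega)
  rw [show k₁ + (e + 1 + r) - i = m + e + r by omega, show k₁ + 1 + e - i = m + e by omega,
    mul_assoc, mul_assoc, ← mul_assoc (halfChoose k₁ i), h, ← hc]
  congr 2
  simp only [P, Polynomial.eval_mul, Polynomial.eval_prod, Polynomial.eval_sub, Polynomial.eval_C,
    Polynomial.eval_X, hm']
  congr 1
  · congr 1
    exact prod_congr rfl fun s _ ↦ by ring
  · exact prod_congr rfl fun s _ ↦ by ring

section DenominatorPositivity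

open PowerSeries

/-- The denominator of the Padé approximant of type `(k, l)` to `(1 - z) ^ (-1/2)`. -/
noncomputable def padeDenom (z : ℝ) (k l : ℕ) : ℝ :=
  ∑ i ∈ range (l + 1), (-1) ^ i * halfChoose k i * ((k + l - i).choose k : ℝ) * z ^ i

/-- The power series of `(1 - z * X) ^ (k + 1/2)`. -/
noncomputable def halfSeries (z : ℝ) (k : ℕ) : PowerSeries ℝ :=
  PowerSeries.mk fun i ↦ (-1) ^ i * halfChoose k i * z ^ i

lemma halfSeries_succ (z : ℝ) (k : ℕ) :
    halfSeries z (k + 1) = (1 - C z * X) * halfSeries z k := by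
  ext i
  rw [sub_mul, one_mul, mul_assoc, map_sub, coeff_C_mul]
  cases i with
  | zero => simp [halfSeries, halfChoose_zero]
  | succ i =>
    rw [coeff_succ_X_mul]
    simp only [halfSeries, coeff_mk, halfChoose_succ_succ]
    ring

lemma padeDenom_eq_coeff (z : ℝ) (k l : ℕ) :
    padeDenom z k l = coeff l (halfSeries z k * (mk 1 : PowerSeries ℝ) ^ (k + 1)) := by
  rw [mk_one_pow_eq_mk_choose_add, coeff_mul, Finset.Nat.sum_antidiagonal_eq_sum_range_succ_mk,
    padeDenom]
  refine sum_congr rfl fun i hi ↦ ?_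
  rw [mem_range] at hi
  simp only [halfSeries, coeff_mk]
  rw [show k + l - i = k + (l - i) by omega]
  ring

lemma padeDenom_succ_succ (z : ℝ) (k l : ℕ) :
    padeDenom z (k + 1) (l + 1) =
      padeDenom z (k + 1) l + (padeDenom z k (l + 1) - z * padeDenom z k l) := by
  have h : halfSeries z (k + 1) * (mk 1 : PowerSeries ℝ) ^ (k + 1 + 1) -
      halfSeries z (k + 1) * (mk 1 : PowerSeries ℝ) ^ (k + 1 + 1) * X =
      halfSeries z k * (mk 1 : PowerSeries ℝ) ^ (k + 1) -
        C z * (halfSeries z k * (mk 1 : PowerSeries ℝ) ^ (k + 1) * X) := by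
    rw [halfSeries_succ]
    linear_combination ((1 - C z * X) * halfSeries z k * (mk 1 : PowerSeries ℝ) ^ (k + 1)) *
      mk_one_mul_one_sub_eq_one ℝ
  have := congrArg (coeff (l + 1)) h
  rw [map_sub, map_sub, coeff_succ_mul_X, coeff_C_mul, coeff_succ_mul_X] at this
  simp only [padeDenom_eq_coeff]
  linear_combination this

lemma padeDenom_zero_right (z : ℝ) (k : ℕ) : padeDenom z k 0 = 1 := by
  simp [padeDenom, halfChoose_zero]

lemma abs_halfChoose_zero_le (i : ℕ) : |halfChoose 0 (i + 1)| ≤ 1 / 2 := by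
  induction i with
  | zero => simp [halfChoose]
  | succ i ih =>
    have h := halfChoose_succ 0 (i + 1)
    have h' : |halfChoose 0 (i + 1 + 1)| * ((i : ℝ) + 2) =
        |halfChoose 0 (i + 1)| * ((i : ℝ) + 1 / 2) := by
      have e₁ : |(i : ℝ) + 1 + 1| = i + 2 := by rw [abs_of_nonneg (by positivity)]; ring
      have e₂ : |(0 : ℝ) + 1 / 2 - (i + 1)| = i + 1 / 2 := by
        rw [abs_of_nonpos (by linarith [(i.cast_nonneg : (0 : ℝ) ≤ i)])]; ring
      have := congrArg abs h
      push_cast at this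
      rwa [abs_mul, abs_mul, e₁, e₂] at this
    have hi : (0 : ℝ) ≤ i := i.cast_nonneg
    nlinarith [abs_nonneg (halfChoose 0 (i + 1)), abs_nonneg (halfChoose 0 (i + 1 + 1))]

lemma abs_padeDenom_zero_left_sub_one_le {z : ℝ} (h0 : 0 ≤ z) (h1 : z ≤ 1 / 4) (l : ℕ) :
    |padeDenom z 0 l - 1| ≤ z := by
  have key : |padeDenom z 0 l - 1| ≤ ∑ i ∈ range l, 1 / 2 * z ^ (i + 1) := by
    rw [padeDenom, sum_range_succ']
    simp only [halfChoose_zero, Nat.choose_zero_right, Nat.cast_one, pow_zero, mul_one,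
      add_sub_cancel_right]
    refine (abs_sum_le_sum_abs _ _).trans (sum_le_sum fun i _ ↦ ?_)
    rw [abs_mul, abs_mul, abs_pow, abs_neg, abs_one, one_pow, one_mul,
      abs_of_nonneg (by positivity : 0 ≤ z ^ (i + 1))]
    gcongr
    exact abs_halfChoose_zero_le i
  have hs : ∀ l : ℕ, ∑ i ∈ range l, 1 / 2 * z ^ (i + 1) ≤ z - z * z ^ l := by
    intro l
    induction l with
    | zero => simp
    | succ l ih =>
      rw [sum_range_succ]
      have : 0 ≤ z ^ (l + 1) := by positivity
      have e : z * z ^ (l + 1) ≤ 1 / 4 * z ^ (l + 1) := by gcongr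
      rw [pow_succ] at *
      nlinarith
  have := hs l
  have : 0 ≤ z * z ^ l := by positivity
  linarith

lemma padeDenom_lower {z : ℝ} (h0 : 0 ≤ z) (h1 : z ≤ 1 / 4) (k l : ℕ) :
    1 / 2 ≤ padeDenom z k l ∧ z * padeDenom z k l ≤ padeDenom z k (l + 1) := by
  induction k generalizing l with
  | zero =>
    have h := abs_le.1 (abs_padeDenom_zero_left_sub_one_le h0 h1 l)
    have h' := abs_le.1 (abs_padeDenom_zero_left_sub_one_le h0 h1 (l + 1))
    constructor
    · linarith [h.1]
    · nlinarith [h.2, h'.1]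
  | succ k ih =>
    have hmono : ∀ l, padeDenom z (k + 1) l ≤ padeDenom z (k + 1) (l + 1) := fun l ↦ by
      rw [padeDenom_succ_succ]; linarith [(ih l).2]
    have hone : ∀ l, 1 ≤ padeDenom z (k + 1) l := fun l ↦ by
      induction l with
      | zero => rw [padeDenom_zero_right]
      | succ l ihl => exact ihl.trans (hmono l)
    refine ⟨by linarith [hone l], ?_⟩
    nlinarith [hone l, hmono l]

end DenominatorPositivity

/-- The coefficient of `z ^ i` in `padeDenom z k l`. -/
noncomputable def padeCoeff (k l i : ℕ) : ℝ :=
  (-1) ^ i * halfChoose k i * ((k + l - i).choose k : ℝ)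

/-- The coefficient of `z ^ j` in the product of `padeDenom z k l` with the power series of
`(1 - z) ^ (-1/2)`. -/
noncomputable def padeNumCoeff (k l j : ℕ) : ℝ :=
  ∑ i ∈ range (l + 1), if i ≤ j then padeCoeff k l i * invSqrtCoeff (j - i) else 0

/-- The numerator of the Padé approximant of type `(k, l)` to `(1 - z) ^ (-1/2)`. -/
noncomputable def padeNum (z : ℝ) (k l : ℕ) : ℝ :=
  ∑ j ∈ range (k + 1), padeNumCoeff k l j * z ^ j

lemma padeDenom_eq_sum_padeCoeff (z : ℝ) (k l : ℕ) :
    padeDenom z k l = ∑ i ∈ range (l + 1), padeCoeff k l i * z ^ i := rfl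

lemma sum_range_sub_eq_sum_ite {n i : ℕ} (h : i ≤ n) (f : ℕ → ℝ) :
    ∑ m ∈ range (n - i), f m = ∑ j ∈ range n, if i ≤ j then f (j - i) else 0 := by
  obtain ⟨r, rfl⟩ := Nat.exists_eq_add_of_le h
  have hz : ∑ j ∈ range i, (if i ≤ j then f (j - i) else 0) = 0 :=
    sum_eq_zero fun j hj ↦ if_neg (by rw [mem_range] at hj; omega)
  rw [sum_range_add, Nat.add_sub_cancel_left, hz, zero_add]
  exact sum_congr rfl fun m _ ↦ by simp

lemma padeNum_eq_sum {k l : ℕ} (h : l ≤ k) (z : ℝ) :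
    padeNum z k l = ∑ i ∈ range (l + 1),
      padeCoeff k l i * z ^ i * ∑ m ∈ range (k + 1 + l - i), invSqrtCoeff m * z ^ m := by
  have e₁ : padeNum z k l = ∑ j ∈ range (k + 1 + l), padeNumCoeff k l j * z ^ j := by
    rw [sum_range_add, padeNum, left_eq_add]
    refine sum_eq_zero fun e he ↦ ?_
    rw [mem_range] at he
    refine mul_eq_zero_of_left ?_ _
    rw [padeNumCoeff]
    refine Eq.trans (sum_congr rfl fun i hi ↦ ?_) (sum_halfChoose_mul_invSqrtCoeff_eq_zero he h)
    rw [mem_range] at hi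
    rw [if_pos (by omega), padeCoeff]
  rw [e₁]
  simp only [padeNumCoeff, sum_mul]
  rw [sum_comm]
  refine sum_congr rfl fun i hi ↦ ?_
  rw [mem_range] at hi
  rw [sum_range_sub_eq_sum_ite (by omega), mul_sum]
  refine sum_congr rfl fun j _ ↦ ?_
  split_ifs with hij
  · obtain ⟨m, rfl⟩ := Nat.exists_eq_add_of_le hij
    rw [Nat.add_sub_cancel_left, pow_add]
    ring
  · simp

lemma abs_padeDenom_mul_sub_padeNum_le {k l : ℕ} (h : l ≤ k) {z : ℝ} (h0 : 0 ≤ z) (h1 : z < 1) :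
    |padeDenom z k l * (1 / √(1 - z)) - padeNum z k l| ≤
      (∑ i ∈ range (l + 1), |padeCoeff k l i|) * (z ^ (k + 1 + l) / (1 - z)) := by
  rw [padeNum_eq_sum h, padeDenom_eq_sum_padeCoeff, sum_mul, ← sum_sub_distrib, sum_mul]
  refine (abs_sum_le_sum_abs _ _).trans (sum_le_sum fun i hi ↦ ?_)
  rw [mem_range] at hi
  obtain ⟨b₁, b₂⟩ := sum_invSqrtCoeff_bounds h0 h1 (k + 1 + l - i)
  have e : z ^ (k + 1 + l) = z ^ i * z ^ (k + 1 + l - i) := by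
    rw [← pow_add]; congr 1; omega
  rw [← mul_sub, abs_mul, abs_mul, abs_of_nonneg b₁, abs_of_nonneg (by positivity : 0 ≤ z ^ i),
    e, mul_div_assoc, ← mul_assoc]
  gcongr

lemma sum_abs_padeCoeff_le {k l : ℕ} (h : l ≤ k) :
    ∑ i ∈ range (l + 1), |padeCoeff k l i| ≤ 2 ^ (k + 1 + (k + l)) := by
  have h₁ : ∀ i ∈ range (l + 1), |padeCoeff k l i| ≤ ((k + 1).choose i : ℝ) * 2 ^ (k + l) := by
    intro i hi
    rw [mem_range] at hi
    rw [padeCoeff, abs_mul, abs_mul, abs_pow, abs_neg, abs_one, one_pow, one_mul, Nat.abs_cast]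
    gcongr
    · exact abs_halfChoose_le (by omega)
    · have : (k + l - i).choose k ≤ 2 ^ (k + l) :=
        (Nat.choose_le_two_pow _ _).trans (Nat.pow_le_pow_right (by norm_num) (by omega))
      exact_mod_cast this
  refine (sum_le_sum h₁).trans ?_
  rw [← sum_mul, pow_add 2 (k + 1) (k + l)]
  gcongr
  rw [← Nat.cast_sum]
  have : ∑ i ∈ range (l + 1), (k + 1).choose i ≤ 2 ^ (k + 1) := by
    rw [← Nat.sum_range_choose]
    exact sum_le_sum_of_subset (by intro x; simp only [mem_range]; omega)
  exact_mod_cast this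

lemma padeDenom_le {k l : ℕ} (h : l ≤ k) {z : ℝ} (h0 : 0 ≤ z) (h1 : z ≤ 1) :
    padeDenom z k l ≤ 2 ^ (k + 1 + (k + l)) := by
  refine le_trans ?_ (sum_abs_padeCoeff_le h)
  rw [padeDenom_eq_sum_padeCoeff]
  refine sum_le_sum fun i _ ↦ ?_
  calc _ ≤ |padeCoeff k l i| * 1 := by
        gcongr
        · exact le_abs_self _
        · exact pow_le_one₀ h0 h1
    _ = _ := mul_one _

lemma exists_int_four_pow_mul_padeCoeff (k l i : ℕ) :
    ∃ u : ℤ, 4 ^ i * padeCoeff k l i = u := by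
  obtain ⟨u, hu⟩ := exists_int_four_pow_mul_halfChoose k i
  refine ⟨(-1) ^ i * u * ((k + l - i).choose k : ℕ), ?_⟩
  push_cast
  rw [← hu, padeCoeff]
  ring

lemma exists_int_four_pow_mul_padeNumCoeff (k l j : ℕ) :
    ∃ u : ℤ, 4 ^ j * padeNumCoeff k l j = u := by
  choose u hu using exists_int_four_pow_mul_padeCoeff k l
  refine ⟨∑ i ∈ range (l + 1), if i ≤ j then u i * (j - i).centralBinom else 0, ?_⟩
  push_cast
  rw [padeNumCoeff, mul_sum]
  refine sum_congr rfl fun i _ ↦ ?_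
  split_ifs with hij
  · obtain ⟨m, rfl⟩ := Nat.exists_eq_add_of_le hij
    rw [Nat.add_sub_cancel_left, pow_add]
    rw [← hu, invSqrtCoeff]
    field_simp
  · simp

lemma exists_int_mul_padeDenom {k l : ℕ} (h : l ≤ k) {a N : ℕ} (hN : 0 < N) :
    ∃ u : ℤ, 4 ^ k * (N : ℝ) ^ l * padeDenom ((a : ℝ) / N) k l = u := by
  choose u hu using exists_int_four_pow_mul_padeCoeff k l
  refine ⟨∑ i ∈ range (l + 1), u i * 4 ^ (k - i) * a ^ i * N ^ (l - i), ?_⟩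
  rw [padeDenom_eq_sum_padeCoeff, mul_sum]
  push_cast
  refine sum_congr rfl fun i hi ↦ ?_
  rw [mem_range] at hi
  obtain ⟨r, rfl⟩ := Nat.exists_eq_add_of_le (by omega : i ≤ l)
  obtain ⟨s, rfl⟩ := Nat.exists_eq_add_of_le (by omega : i ≤ k)
  have hN' : (N : ℝ) ≠ 0 := by positivity
  rw [Nat.add_sub_cancel_left, Nat.add_sub_cancel_left, ← hu, div_pow, pow_add, pow_add]
  field_simp

lemma exists_int_mul_padeNum {k l : ℕ} {a N T : ℕ} (hN : 0 < N) (hT : N ^ k ∣ T) :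
    ∃ u : ℤ, 4 ^ k * (T : ℝ) * padeNum ((a : ℝ) / N) k l = u := by
  choose u hu using exists_int_four_pow_mul_padeNumCoeff k l
  obtain ⟨w, rfl⟩ := hT
  refine ⟨∑ j ∈ range (k + 1), u j * 4 ^ (k - j) * a ^ j * N ^ (k - j) * w, ?_⟩
  rw [padeNum, mul_sum]
  push_cast
  refine sum_congr rfl fun j hj ↦ ?_
  rw [mem_range] at hj
  obtain ⟨s, rfl⟩ := Nat.exists_eq_add_of_le (by omega : j ≤ k)
  have hN' : (N : ℝ) ≠ 0 := by positivity
  rw [Nat.add_sub_cancel_left, ← hu, div_pow, pow_add, pow_add]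
  field_simp

set_option maxHeartbeats 1000000 in
lemma not_sq_eq_of_bounds {k l : ℕ} (h : l ≤ k) {N T a c : ℕ} (ha : 0 < a) (haN : 4 * a ≤ N)
    (hT : 0 < T) (hdvd : N ^ k ∣ T * N ^ l)
    (h₁ : 8 * 2 ^ (k + 1 + (k + l)) * a ^ (k + l) * T ^ 2 ≤ N ^ (k + l))
    (h₂ : 4 * 4 ^ k * 2 ^ (k + 1 + (k + l)) * a * N ^ l ≤ T) :
    (c : ℝ) ^ 2 ≠ ((N : ℝ) - a) * (N * T ^ 2 - a) := by
  intro hc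
  have hN : 0 < N := by omega
  have hN' : (0 : ℝ) < N := by exact_mod_cast hN
  have hT' : (0 : ℝ) < T := by exact_mod_cast hT
  have hT1 : (1 : ℝ) ≤ T := by exact_mod_cast hT
  have ha' : (0 : ℝ) < a := by exact_mod_cast ha
  have haN' : 4 * (a : ℝ) ≤ N := by exact_mod_cast haN
  set z : ℝ := (a : ℝ) / N with hz
  obtain ⟨E, hE⟩ : ∃ E : ℝ, E = 2 ^ (k + 1 + (k + l)) := ⟨_, rfl⟩
  have hE1 : 1 ≤ E := hE ▸ one_le_pow₀ (by norm_num)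
  have hz0 : 0 < z := by positivity
  have hz4 : z ≤ 1 / 4 := by rw [hz, div_le_iff₀ hN']; linarith
  have haz : (a : ℝ) = z * N := by rw [hz]; field_simp
  set y : ℝ := z / T ^ 2 with hy
  have hyz : z = y * T ^ 2 := by rw [hy]; field_simp
  have hy0 : 0 < y := by positivity
  have hyle : y ≤ z := by rw [hyz]; nlinarith [one_le_pow₀ hT1 (n := 2)]
  set S : ℝ := 1 / √(1 - z) with hS
  set B := padeDenom z k l with hB
  set A := padeNum z k l with hA
  have hs0 : 0 < √(1 - z) := Real.sqrt_pos.2 (by linarith)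
  have hSpos : 0 < S := by positivity
  have hSsq : S ^ 2 * (1 - z) = 1 := by
    rw [hS, div_pow, Real.sq_sqrt (by linarith)]
    have : 1 - z ≠ 0 := by linarith
    field_simp
  have hS1 : 1 ≤ S := by
    by_contra! hlt
    nlinarith
  have hS2 : S ≤ 2 := by
    by_contra! hlt
    nlinarith
  have hB1 : 1 / 2 ≤ B := (padeDenom_lower hz0.le hz4 k l).1
  have hB2 : B ≤ E := hE ▸ padeDenom_le h hz0.le (by linarith)
  set r := √(1 - y) with hr
  have hr0 : 0 ≤ r := Real.sqrt_nonneg _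
  have hrsq : r ^ 2 = 1 - y := Real.sq_sqrt (by linarith)
  have hr1 : r ≤ 1 - y / 2 := by
    by_contra! hlt
    nlinarith
  have hr2 : 1 - y ≤ r := by
    by_contra! hlt
    nlinarith
  have hrem : |B * S - A| < y / 4 := by
    have hEk : (∑ i ∈ range (l + 1), |padeCoeff k l i|) ≤ E := hE ▸ sum_abs_padeCoeff_le h
    have h₁' : 8 * E * z ^ (k + l) * T ^ 2 ≤ 1 := by
      have h₁r : 8 * E * (a : ℝ) ^ (k + l) * T ^ 2 ≤ (N : ℝ) ^ (k + l) := by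
        rw [hE]; exact_mod_cast h₁
      rw [haz, mul_pow] at h₁r
      have : (0 : ℝ) < (N : ℝ) ^ (k + l) := by positivity
      refine le_of_mul_le_mul_right ?_ this
      linarith
    have hzy : 8 * (E * (z ^ (k + 1 + l))) ≤ y := by
      have : 8 * (E * (z ^ (k + 1 + l))) = (8 * E * z ^ (k + l) * T ^ 2) * y := by
        rw [show k + 1 + l = k + l + 1 by ring, pow_succ]
        nth_rewrite 2 [hyz]
        ring
      rw [this]
      exact mul_le_of_le_one_left hy0.le h₁'
    calc |B * S - A| ≤ _ := abs_padeDenom_mul_sub_padeNum_le h hz0.le (by linarith)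
      _ ≤ E * (z ^ (k + 1 + l) / (1 - z)) := by
          gcongr
          exact div_nonneg (by positivity) (by linarith)
      _ < y / 4 := by
          rw [← mul_div_assoc, div_lt_iff₀ (by linarith)]
          have := mul_le_mul_of_nonneg_left hz4 hy0.le
          linarith
  obtain ⟨hrem₁, hrem₂⟩ := abs_lt.1 hrem
  have hcS : (c : ℝ) = (N - a) * T * r * S := by
    have hNa : (0 : ℝ) ≤ (N - a) := by linarith
    refine (pow_left_inj₀ (by positivity) (by positivity) two_ne_zero).1 ?_
    rw [hc, haz]
    simp only [mul_pow]
    rw [hrsq]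
    have : z * N = y * (N * T ^ 2) := by rw [hyz]; ring
    calc (N - z * N) * (N * T ^ 2 - z * N)
        = (N - z * N) * (N * T ^ 2 * (1 - y)) := by rw [this]; ring
      _ = (N - z * N) * (N * T ^ 2 * (1 - y)) * (S ^ 2 * (1 - z)) := by rw [hSsq, mul_one]
      _ = _ := by ring
  obtain ⟨u, hu⟩ := exists_int_mul_padeDenom h hN (a := a)
  obtain ⟨v, hv⟩ := exists_int_mul_padeNum hN hdvd (a := a)
  rw [← hz, ← hB] at hu
  rw [← hz, ← hA] at hv
  push_cast at hv
  set M : ℝ := 4 ^ k * N ^ l * ((N - a) * T) with hM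
  have hMpos : 0 < M := by
    have : (0 : ℝ) < N - a := by linarith
    positivity
  have hint : ((c * u - (N - a) * v : ℤ) : ℝ) = -(M * (B * S * (1 - r) - (B * S - A))) := by
    push_cast
    rw [← hu, ← hv, hcS]
    ring
  have hlow : 0 < B * S * (1 - r) - (B * S - A) := by
    have : 1 / 2 * 1 * (y / 2) ≤ B * S * (1 - r) := by
      gcongr
      linarith
    linarith
  have hupp : B * S * (1 - r) - (B * S - A) ≤ 3 * E * y := by
    have : B * S * (1 - r) ≤ E * 2 * y := by
      gcongr
      · linarith
      · linarith
    have := mul_le_mul_of_nonneg_right hE1 hy0.le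
    linarith
  have hMu : M * (3 * E * y) < 1 := by
    have h₂' : 4 * 4 ^ k * E * (a : ℝ) * N ^ l ≤ T := by rw [hE]; exact_mod_cast h₂
    have h3 : M * (3 * E * y) * T ≤ 3 * (4 ^ k * E * (a : ℝ) * N ^ l) := by
      have : M * (3 * E * y) * T = 3 * (4 ^ k * E * ((N - a) * (y * T ^ 2)) * N ^ l) := by
        rw [hM]; ring
      rw [this, ← hyz]
      have : ((N : ℝ) - a) * z ≤ a := by
        have := mul_nonneg ha'.le hz0.le
        linarith
      gcongr
    have hpos : 0 < 4 ^ k * E * (a : ℝ) * N ^ l := by positivity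
    by_contra! hlt
    have := mul_le_mul_of_nonneg_right hlt hT'.le
    linarith
  have hneg : ((c * u - (N - a) * v : ℤ) : ℝ) < 0 := by
    rw [hint]; linarith [mul_pos hMpos hlow]
  have hgt : (-1 : ℝ) < ((c * u - (N - a) * v : ℤ) : ℝ) := by
    rw [hint]; linarith [mul_le_mul_of_nonneg_left hupp hMpos.le]
  have h1 : (c * u - (N - a) * v : ℤ) < 0 := by exact_mod_cast hneg
  have h2 : (-1 : ℤ) < (c * u - (N - a) * v : ℤ) := by exact_mod_cast hgt
  omega

lemma not_sq_eq_mul_sub_sq {p q n t c : ℕ} (hp : 128 ≤ p) (hq : 0 < q) (hqp : q < p)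
    (hn : 9 ≤ n) (ht : 700 * n ≤ t) :
    (c : ℝ) ^ 2 ≠ ((p : ℝ) ^ n - q ^ 2) * (p ^ (n + 2 * t) - q ^ 2) := by
  obtain ⟨h, r, hr, rfl⟩ : ∃ h r, r < 7 * n ∧ t = 7 * n * h + r :=
    ⟨t / (7 * n), t % (7 * n), Nat.mod_lt _ (by omega), (Nat.div_add_mod _ _).symm⟩
  have hh : 100 ≤ h := by
    by_contra! hlt
    have : 7 * n * h ≤ 7 * n * 99 := Nat.mul_le_mul_left _ (by omega)
    omega
  have hp0 : 0 < p := by omega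
  have h2 : ∀ e m, e ≤ 7 * m → 2 ^ e ≤ p ^ m := fun e m hem ↦
    calc 2 ^ e ≤ 2 ^ (7 * m) := Nat.pow_le_pow_right (by norm_num) hem
      _ = 128 ^ m := by rw [pow_mul]; norm_num
      _ ≤ p ^ m := Nat.pow_le_pow_left hp _
  have key := not_sq_eq_of_bounds (k := 13 * h) (l := 6 * h) (by omega) (N := p ^ n)
    (T := p ^ (7 * n * h + r)) (a := q ^ 2) (c := c) (by positivity) ?_ (by positivity) ?_ ?_ ?_
  · push_cast at key
    convert key using 3
    ring
  · calc 4 * q ^ 2 ≤ p * p ^ 2 := by gcongr; omega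
      _ = p ^ 3 := by ring
      _ ≤ p ^ n := Nat.pow_le_pow_right hp0 (by omega)
  · rw [← pow_mul, ← pow_mul, ← pow_add]
    apply pow_dvd_pow
    nlinarith
  · calc _ ≤ 8 * 2 ^ (13 * h + 1 + (13 * h + 6 * h)) * (p ^ 2) ^ (13 * h + 6 * h) *
          (p ^ (7 * n * h + r)) ^ 2 := by gcongr
      _ = 2 ^ (32 * h + 4) * p ^ (38 * h + 2 * (7 * n * h + r)) := by ring
      _ ≤ p ^ (5 * h + 1) * p ^ (38 * h + 2 * (7 * n * h + r)) := by
          exact Nat.mul_le_mul_right _ (h2 _ _ (by omega))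
      _ = p ^ (5 * h + 1 + (38 * h + 2 * (7 * n * h + r))) := by rw [← pow_add]
      _ ≤ p ^ (n * (13 * h + 6 * h)) := Nat.pow_le_pow_right hp0 (by nlinarith)
      _ = _ := by rw [pow_mul]
  · calc _ ≤ 4 * 4 ^ (13 * h) * 2 ^ (13 * h + 1 + (13 * h + 6 * h)) * p ^ 2 *
          (p ^ n) ^ (6 * h) := by gcongr
      _ = 2 ^ (58 * h + 3) * p ^ (2 + n * (6 * h)) := by
          rw [show (4 : ℕ) = 2 ^ 2 by norm_num, ← pow_mul, ← pow_mul]; ring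
      _ ≤ p ^ (9 * h - 2) * p ^ (2 + n * (6 * h)) := by
          exact Nat.mul_le_mul_right _ (h2 _ _ (by omega))
      _ = p ^ (9 * h - 2 + (2 + n * (6 * h))) := by rw [← pow_add]
      _ ≤ p ^ (7 * n * h + r) := Nat.pow_le_pow_right hp0 (by
          have : 9 * h ≤ n * h := Nat.mul_le_mul_right _ hn
          have e : 7 * n * h = n * (6 * h) + n * h := by ring
          omega)

lemma sq_eq_sq_of_norm_eq {p d X₁ Y₁ X₂ Y₂ : ℤ} {M : ℕ} (hp : Prime p) (hp2 : ¬ p ∣ 2)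
    (hM : M ≠ 0) (hd : 2 ≤ d) (hpd : ¬ p ∣ d) (h₁ : X₁ ^ 2 + d * Y₁ ^ 2 = p ^ M)
    (h₂ : X₂ ^ 2 + d * Y₂ ^ 2 = p ^ M) (hX₁ : ¬ p ∣ X₁) (hX₂ : ¬ p ∣ X₂) : X₁ ^ 2 = X₂ ^ 2 := by
  have hpM : p ∣ p ^ M := dvd_pow_self p hM
  have hQ : p ^ M ≠ 0 := pow_ne_zero _ hp.ne_zero
  have hY₂ : ¬ p ∣ Y₂ := fun h ↦ hX₂ <| hp.dvd_of_dvd_pow (n := 2) <| by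
    rw [← dvd_add_left (dvd_mul_of_dvd_right (dvd_pow h two_ne_zero) d), h₂]
    exact hpM
  have key : d * ((X₁ * Y₂ - X₂ * Y₁) * (X₁ * Y₂ + X₂ * Y₁)) = p ^ M * (X₁ ^ 2 - X₂ ^ 2) := by
    linear_combination X₁ ^ 2 * h₂ - X₂ ^ 2 * h₁
  have hcop : ∀ x : ℤ, ¬ p ∣ x → IsCoprime (p ^ M) x := fun x hx ↦
    (hp.irreducible.coprime_iff_not_dvd.2 hx).pow_left
  have hdvd : p ^ M ∣ (X₁ * Y₂ - X₂ * Y₁) * (X₁ * Y₂ + X₂ * Y₁) :=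
    (hcop d hpd).dvd_of_dvd_mul_left (Dvd.intro _ key.symm)
  have hzero : ∀ U W : ℤ, U ^ 2 + d * W ^ 2 = (p ^ M) ^ 2 → p ^ M ∣ W → W = 0 := by
    rintro U W hUW ⟨v, rfl⟩
    have hv : v = 0 := by
      by_contra hv
      have hv1 : 0 < v ^ 2 := by positivity
      have hQ2 : 0 < (p ^ M) ^ 2 := by positivity
      have : 2 * 1 ≤ d * v ^ 2 := by gcongr; exact hv1
      nlinarith [sq_nonneg U]
    rw [hv, mul_zero]
  have hprod : (X₁ * Y₂ - X₂ * Y₁) * (X₁ * Y₂ + X₂ * Y₁) = 0 := by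
    by_cases h : p ∣ X₁ * Y₂ - X₂ * Y₁
    · have h' : ¬ p ∣ X₁ * Y₂ + X₂ * Y₁ := fun h' ↦ by
        have : p ∣ 2 * (X₁ * Y₂) := by
          have := dvd_add h h'
          rwa [show X₁ * Y₂ - X₂ * Y₁ + (X₁ * Y₂ + X₂ * Y₁) = 2 * (X₁ * Y₂) by ring] at this
        rcases hp.dvd_or_dvd this with h | h
        · exact hp2 h
        · exact (hp.dvd_or_dvd h).elim hX₁ hY₂
      rw [hzero (X₁ * X₂ + d * Y₁ * Y₂) _ ?_ ((hcop _ h').dvd_of_dvd_mul_right hdvd), zero_mul]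
      linear_combination (X₂ ^ 2 + d * Y₂ ^ 2) * h₁ + p ^ M * h₂
    · rw [hzero (X₁ * X₂ - d * Y₁ * Y₂) _ ?_ ((hcop _ h).dvd_of_dvd_mul_left hdvd), mul_zero]
      linear_combination (X₂ ^ 2 + d * Y₂ ^ 2) * h₁ + p ^ M * h₂
  rw [hprod, mul_zero, zero_eq_mul] at key
  exact sub_eq_zero.1 (key.resolve_left hQ)

lemma exists_add_mul_sq_eq_pow {d q b P : ℤ} (h : q ^ 2 + d * b ^ 2 = P) (k : ℕ) :
    ∃ X Y : ℤ, X ^ 2 + d * Y ^ 2 = P ^ (k + 1) ∧ P ∣ X - (2 * q) ^ k * q := by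
  let γ : ℤ√(-d) := ⟨q, b⟩
  have hγ : γ.norm = P := by rw [Zsqrtd.norm_def, ← h]; simp only [γ]; ring
  have hsq : γ * γ = ((2 * q : ℤ) : ℤ√(-d)) * γ - (P : ℤ√(-d)) := by
    rw [← h]
    ext
    · simp only [Zsqrtd.re_mul, Zsqrtd.re_sub, Zsqrtd.re_intCast, Zsqrtd.im_intCast, γ]; ring
    · simp only [Zsqrtd.im_mul, Zsqrtd.im_sub, Zsqrtd.re_intCast, Zsqrtd.im_intCast, γ]; ring
  have hpow : ∀ k : ℕ, ∃ δ : ℤ√(-d),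
      γ ^ (k + 1) = (((2 * q) ^ k : ℤ) : ℤ√(-d)) * γ + (P : ℤ√(-d)) * δ := by
    intro k
    induction k with
    | zero => exact ⟨0, by simp⟩
    | succ k ih =>
      obtain ⟨δ, hδ⟩ := ih
      refine ⟨γ * δ - (((2 * q) ^ k : ℤ) : ℤ√(-d)), ?_⟩
      rw [pow_succ, hδ, pow_succ]
      push_cast at hsq ⊢
      linear_combination (2 * (q : ℤ√(-d))) ^ k * hsq
  obtain ⟨δ, hδ⟩ := hpow k
  refine ⟨(γ ^ (k + 1)).re, (γ ^ (k + 1)).im, ?_, δ.re, ?_⟩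
  · have : (γ ^ (k + 1)).norm = P ^ (k + 1) := by
      rw [← hγ]; exact map_pow Zsqrtd.normMonoidHom γ (k + 1)
    rw [← this, Zsqrtd.norm_def]
    ring
  · rw [hδ, Zsqrtd.re_add, Zsqrtd.re_smul, Zsqrtd.re_smul]
    ring

lemma pow_dvd_two_mul_pow_sub_one {p q d b₁ b₂ : ℤ} {n m : ℕ} (hp : Prime p) (hp2 : ¬ p ∣ 2)
    (hpq : ¬ p ∣ q) (hd : 2 ≤ d) (hn : n ≠ 0) (h₁ : q ^ 2 + d * b₁ ^ 2 = p ^ n)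
    (h₂ : q ^ 2 + d * b₂ ^ 2 = p ^ (n + m)) : p ^ n ∣ (2 * q) ^ (2 * m) - 1 := by
  obtain ⟨n, rfl⟩ := Nat.exists_eq_succ_of_ne_zero hn
  obtain ⟨X₁, Y₁, e₁, c₁⟩ := exists_add_mul_sq_eq_pow h₁ (n + m)
  obtain ⟨X₂, Y₂, e₂, c₂⟩ := exists_add_mul_sq_eq_pow h₂ n
  have h2q : ¬ p ∣ 2 * q := fun h ↦ (hp.dvd_or_dvd h).elim hp2 hpq
  have hnd : ∀ k j X, j ≠ 0 → p ^ j ∣ X - (2 * q) ^ k * q → ¬ p ∣ X := fun k j X hj hX h ↦ by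
    have h' : p ∣ (2 * q) ^ k * q := by
      rw [← sub_sub_cancel X ((2 * q) ^ k * q)]
      exact dvd_sub h ((dvd_pow_self p hj).trans hX)
    rcases hp.dvd_or_dvd h' with h' | h'
    · exact h2q (hp.dvd_of_dvd_pow h')
    · exact hpq h'
  have hpd : ¬ p ∣ d := fun h ↦ hpq <| hp.dvd_of_dvd_pow (n := 2) <| by
    rw [← dvd_add_left (dvd_mul_of_dvd_left h _), h₁]
    exact dvd_pow_self p hn
  rw [← pow_mul] at e₁ e₂
  rw [show (n.succ + m) * (n + 1) = n.succ * (n + m + 1) by simp only [Nat.succ_eq_add_one]; ring]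
    at e₂
  have hsq := sq_eq_sq_of_norm_eq hp hp2 (by positivity) hd hpd e₁ e₂
    (hnd _ _ _ hn c₁) (hnd _ _ _ (by omega) c₂)
  have c₂' := (pow_dvd_pow p (Nat.le_add_right n.succ m)).trans c₂
  have hfin : p ^ n.succ ∣ (2 * q) ^ (2 * (n + 1)) * ((2 * q) ^ (2 * m) - 1) := by
    have e : (2 * q) ^ (2 * (n + 1)) * ((2 * q) ^ (2 * m) - 1) =
        4 * ((X₂ - (2 * q) ^ n * q) * (X₂ + (2 * q) ^ n * q) -
          (X₁ - (2 * q) ^ (n + m) * q) * (X₁ + (2 * q) ^ (n + m) * q)) := by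
      linear_combination 4 * hsq
    rw [e]
    exact dvd_mul_of_dvd_right (dvd_sub (dvd_mul_of_dvd_left c₂' _) (dvd_mul_of_dvd_left c₁ _)) _
  have hcop : IsCoprime (p ^ n.succ) ((2 * q) ^ (2 * (n + 1))) :=
    (hp.irreducible.coprime_iff_not_dvd.2 h2q).pow
  exact hcop.dvd_of_dvd_mul_left hfin

lemma pow_dvd_of_pow_dvd_pow_sub_one {p n m : ℕ} {a : ℤ} (hp : p.Prime) (hodd : Odd p)
    (ha : ¬ (p : ℤ) ∣ a) (hw : ¬ (p : ℤ) ^ 2 ∣ a ^ (p - 1) - 1)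
    (h : (p : ℤ) ^ (n + 1) ∣ a ^ m - 1) : p ^ n ∣ m := by
  have hfermat : (p : ℤ) ∣ a ^ (p - 1) - 1 :=
    (Int.ModEq.pow_card_sub_one_eq_one hp
      (((Nat.prime_iff_prime_int.1 hp).irreducible.coprime_iff_not_dvd.2 ha).symm)).symm.dvd
  have hg : ¬ (p : ℤ) ∣ a ^ (p - 1) := fun h ↦ ha ((Nat.prime_iff_prime_int.1 hp).dvd_of_dvd_pow h)
  have hlte := Int.emultiplicity_pow_sub_pow hp hodd (x := a ^ (p - 1)) (y := 1) hfermat hg m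
  rw [one_pow] at hlte
  have h' : (p : ℤ) ^ (n + 1) ∣ (a ^ (p - 1)) ^ m - 1 := by
    refine h.trans ?_
    rw [← pow_mul, mul_comm, pow_mul]
    exact sub_one_dvd_pow_sub_one _ _
  have hone : emultiplicity (p : ℤ) (a ^ (p - 1) - 1) = 1 := by
    refine (emultiplicity_eq_coe (n := 1)).2 ?_
    simpa using ⟨hfermat, hw⟩
  rw [pow_dvd_iff_le_emultiplicity, hlte, hone] at h'
  rw [pow_dvd_iff_le_emultiplicity]
  rw [Nat.cast_add, Nat.cast_one, add_comm] at h'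
  exact (ENat.add_le_add_iff_left (by simp)).1 h'

end

lemma exists_eq_add_mul_of_mem_adjoin {K L : Type*} [Field K] [Field L] [Algebra K L] {x y : L}
    {r : K} (hx : x ^ 2 = algebraMap K L r) (hy : y ∈ IntermediateField.adjoin K {x}) :
    ∃ u v : K, y = algebraMap K L u + algebraMap K L v * x := by
  have hint : IsIntegral K x := by
    refine ⟨Polynomial.X ^ 2 - Polynomial.C r, Polynomial.monic_X_pow_sub_C r two_ne_zero, ?_⟩
    simp [hx]
  rw [← IntermediateField.mem_toSubalgebra,
    IntermediateField.adjoin_simple_toSubalgebra_of_isAlgebraic hint.isAlgebraic] at hy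
  induction hy using Algebra.adjoin_induction with
  | mem z hz => exact ⟨0, 1, by rw [Set.mem_singleton_iff.1 hz]; simp⟩
  | algebraMap s => exact ⟨s, 0, by simp⟩
  | add z w _ _ hz hw =>
    obtain ⟨u, v, rfl⟩ := hz
    obtain ⟨u', v', rfl⟩ := hw
    exact ⟨u + u', v + v', by simp only [map_add]; ring⟩
  | mul z w _ _ hz hw =>
    obtain ⟨u, v, rfl⟩ := hz
    obtain ⟨u', v', rfl⟩ := hw
    refine ⟨u * u' + v * v' * r, u * v' + v * u', ?_⟩
    simp only [map_add, map_mul]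
    linear_combination algebraMap K L v * algebraMap K L v' * hx

lemma isSquare_mul_of_adjoin_eq {a b : ℕ} (ha : 0 < a) (hb : 0 < b) {x y : ℂ}
    (hx : x ^ 2 = -(a : ℂ)) (hy : y ^ 2 = -(b : ℂ))
    (h : IntermediateField.adjoin ℚ {x} = IntermediateField.adjoin ℚ {y}) : IsSquare (a * b) := by
  have hy' : y ∈ IntermediateField.adjoin ℚ {x} :=
    h ▸ IntermediateField.mem_adjoin_simple_self ℚ y
  obtain ⟨u, v, rfl⟩ := exists_eq_add_mul_of_mem_adjoin (r := -(a : ℚ)) (by simp [hx]) hy'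
  simp only [eq_ratCast] at hy
  have hneg : ∀ (w : ℚ) (m : ℕ), 0 < m → (w : ℂ) ^ 2 ≠ -(m : ℂ) := fun w m hm h ↦ by
    have : w ^ 2 = -(m : ℚ) := by exact_mod_cast h
    have : (0 : ℚ) < m := by exact_mod_cast hm
    nlinarith [sq_nonneg w]
  have hv : v ≠ 0 := by
    rintro rfl
    exact hneg u b hb (by simpa using hy)
  have hu : u = 0 := by
    by_contra hu
    have hu' : (u : ℂ) ≠ 0 := by exact_mod_cast hu
    have hv' : (v : ℂ) ≠ 0 := by exact_mod_cast hv
    apply hneg ((v ^ 2 * a - b - u ^ 2) / (2 * u * v)) a ha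
    rw [← hx]
    push_cast
    congr 1
    field_simp
    linear_combination -hy + v ^ 2 * hx
  subst hu
  have hb' : (b : ℚ) = v ^ 2 * a := by
    have : (b : ℂ) = v ^ 2 * a := by
      simp only [Rat.cast_zero, zero_add] at hy
      linear_combination hy - v ^ 2 * hx
    exact_mod_cast this
  rw [← Rat.isSquare_natCast_iff]
  refine ⟨v * a, ?_⟩
  push_cast
  rw [hb']
  ring

lemma exists_eq_mul_sq_of_isSquare_mul {a b : ℕ} (ha : a ≠ 0) (h : IsSquare (a * b)) :
    ∃ d x y : ℕ, a = d * x ^ 2 ∧ b = d * y ^ 2 := by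
  obtain ⟨d, x, rfl, hd⟩ := Nat.sq_mul_squarefree a
  obtain ⟨c, hc⟩ := h
  have hx : 0 < x := Nat.pos_of_ne_zero fun hx ↦ ha (by simp [hx])
  have hd0 : 0 < d := Nat.pos_of_ne_zero fun hx ↦ ha (by simp [hx])
  obtain ⟨e, rfl⟩ : x ∣ c := (Nat.pow_dvd_pow_iff two_ne_zero).1
    ⟨d * b, by rw [sq c, ← hc]; ring⟩
  have he : d * b = e ^ 2 := by
    apply Nat.eq_of_mul_eq_mul_left (pow_pos hx 2)
    linear_combination hc
  obtain ⟨f, rfl⟩ : d ∣ e := (hd.dvd_pow_iff_dvd two_ne_zero).1 ⟨b, he.symm⟩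
  refine ⟨d, x, f, mul_comm _ _, Nat.eq_of_mul_eq_mul_left hd0 ?_⟩
  rw [he]
  ring

lemma le_of_two_pow_modEq_one {p : ℕ} (hp : p.Prime) (hmod : p % 4 = 3)
    (hw : 2 ^ (p - 1) ≡ 1 [MOD p ^ 2]) : 128 ≤ p := by
  by_contra! hlt
  interval_cases p <;> first
    | omega
    | norm_num [Nat.ModEq] at hw

lemma not_exists_of_lt {p q n m : ℕ} (hp : p.Prime) (hmod : p % 4 = 3) (hp128 : 128 ≤ p)
    (hw : 2 ^ (p - 1) ≡ 1 [MOD p ^ 2]) (hq : Odd q) (hqp : q < p)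
    (hqnw : ¬ (q ^ (p - 1) ≡ 1 [MOD p ^ 2])) (hn : 9 ≤ n) (hno : Odd n) (hm : 0 < m)
    (hsq : IsSquare ((p ^ n - q ^ 2) * (p ^ (n + 2 * m) - q ^ 2))) : False := by
  have hq0 : 0 < q := hq.pos
  have hle : ∀ k, 9 ≤ k → q ^ 2 < p ^ k := fun k hk ↦
    calc q ^ 2 < p ^ 2 := Nat.pow_lt_pow_left hqp two_ne_zero
      _ ≤ p ^ k := Nat.pow_le_pow_right hp.pos (by omega)
  have hl₁ := hle n hn
  have hl₂ := hle (n + 2 * m) (by omega)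
  obtain ⟨d, b₁, b₂, h₁, h₂⟩ := exists_eq_mul_sq_of_isSquare_mul (by omega) hsq
  have hpn : p ^ n % 4 = 3 := by
    obtain ⟨k, rfl⟩ := hno
    rw [pow_succ, pow_mul, Nat.mul_mod, Nat.pow_mod, Nat.pow_mod p 2, hmod]
    norm_num
  have hq2 : q ^ 2 % 4 = 1 := by
    obtain ⟨k, rfl⟩ := hq
    ring_nf
    omega
  have hd : 2 ≤ d := by
    by_contra! hlt
    interval_cases d
    · omega
    · have : b₁ ^ 2 % 4 = 0 ∨ b₁ ^ 2 % 4 = 1 := by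
        rcases Nat.even_or_odd' b₁ with ⟨k, rfl | rfl⟩
        · left; ring_nf; omega
        · right; ring_nf; omega
      omega
  have hpi : Prime (p : ℤ) := Nat.prime_iff_prime_int.1 hp
  have hp2 : ¬ (p : ℤ) ∣ 2 := fun h ↦ by
    have := Nat.le_of_dvd two_pos (by exact_mod_cast h : p ∣ 2)
    omega
  have hpq : ¬ (p : ℤ) ∣ q := fun h ↦ by
    have := Nat.le_of_dvd hq0 (by exact_mod_cast h : p ∣ q)
    omega
  have hgap : (p : ℤ) ^ n ∣ (2 * q) ^ (2 * (2 * m)) - 1 := by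
    refine pow_dvd_two_mul_pow_sub_one (d := d) (b₁ := b₁) (b₂ := b₂) hpi hp2 hpq
      (by exact_mod_cast hd) (by omega) ?_ ?_
    · exact_mod_cast (by omega : q ^ 2 + d * b₁ ^ 2 = p ^ n)
    · exact_mod_cast (by omega : q ^ 2 + d * b₂ ^ 2 = p ^ (n + 2 * m))
  have hnw : ¬ (p : ℤ) ^ 2 ∣ (2 * q : ℤ) ^ (p - 1) - 1 := fun h ↦ hqnw <| by
    have h' : 1 ≡ (2 * q) ^ (p - 1) [MOD p ^ 2] := by
      rw [Nat.modEq_iff_dvd]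
      exact_mod_cast h
    rw [mul_pow] at h'
    have := (hw.mul_right (q ^ (p - 1))).symm.trans h'.symm
    rwa [one_mul] at this
  obtain ⟨n, rfl⟩ : ∃ k, n = k + 1 := ⟨n - 1, by omega⟩
  have hdvd : p ^ n ∣ 2 * (2 * m) :=
    pow_dvd_of_pow_dvd_pow_sub_one hp (Nat.odd_iff.2 (by omega))
      (fun h ↦ (hpi.dvd_or_dvd h).elim hp2 hpq) hnw hgap
  have hcop : Nat.Coprime (p ^ n) 2 :=
    Nat.Coprime.pow_left _ ((Nat.coprime_primes hp Nat.prime_two).2 (by omega))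
  have hmle : p ^ n ≤ m :=
    Nat.le_of_dvd hm (hcop.dvd_of_dvd_mul_left (hcop.dvd_of_dvd_mul_left hdvd))
  have h700 : 700 * (n + 1) ≤ m := by
    have e₁ : n - 2 < 128 ^ (n - 2) := Nat.lt_pow_self (by norm_num)
    have e₂ : 128 ^ n ≤ p ^ n := Nat.pow_le_pow_left hp128 _
    have e₃ : 128 ^ n = 128 ^ 2 * 128 ^ (n - 2) := by rw [← pow_add]; congr 1; omega
    omega
  obtain ⟨c, hc⟩ := hsq
  apply not_sq_eq_mul_sub_sq (c := c) hp128 hq0 hqp hn h700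
  rw [sq, ← Nat.cast_mul, ← hc, Nat.cast_mul, Nat.cast_sub hl₁.le, Nat.cast_sub hl₂.le]
  push_cast
  rfl

lemma nine_le_of_odd_of_not_prime {n : ℕ} (ho : Odd n) (h1 : 1 < n) (hn : ¬ n.Prime) :
    9 ≤ n := by
  by_contra! hlt
  rw [Nat.odd_iff] at ho
  interval_cases n <;> first | omega | exact hn (by norm_num)

/-- Let `p` be a prime with `p ≡ 3 (mod 4)` and `2^(p−1) ≡ 1 (mod p^2)`, and let `q1` be a
prime factor of `p − 2` such that `q1^(p−1) ≢ 1 (mod p^2)`. If `n1` and `n2` are positive odd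
composite numbers such that `ℚ(√(q1^2 − p^n1)) = ℚ(√(q1^2 − p^n2))`, then `n1 = n2`. -/
theorem stmt_5 (p : ℕ) (hp : p.Prime) (hmod : p % 4 = 3)
    (hw : 2 ^ (p - 1) ≡ 1 [MOD p ^ 2])
    (q1 : ℕ) (hq1 : q1.Prime) (hq1dvd : q1 ∣ p - 2)
    (hq1nw : ¬ (q1 ^ (p - 1) ≡ 1 [MOD p ^ 2]))
    (n1 n2 : ℕ) (hpos1 : 0 < n1) (hpos2 : 0 < n2) (ho1 : Odd n1) (ho2 : Odd n2)
    (hc1 : 1 < n1 ∧ ¬ n1.Prime) (hc2 : 1 < n2 ∧ ¬ n2.Prime)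
    (z1 z2 : ℂ) (hz1 : z1 ^ 2 = (q1 : ℂ) ^ 2 - (p : ℂ) ^ n1)
    (hz2 : z2 ^ 2 = (q1 : ℂ) ^ 2 - (p : ℂ) ^ n2)
    (heq : IntermediateField.adjoin ℚ {z1} = IntermediateField.adjoin ℚ {z2}) :
    n1 = n2 := by
  wlog hle : n1 ≤ n2 generalizing n1 n2 z1 z2
  · exact (this n2 n1 hpos2 hpos1 ho2 ho1 hc2 hc1 z2 z1 hz2 hz1 heq.symm (by omega)).symm
  by_contra hne
  have hp128 := le_of_two_pow_modEq_one hp hmod hw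
  have hqp : q1 < p := by
    have := Nat.le_of_dvd (by omega) hq1dvd
    omega
  have hqo : Odd q1 := Odd.of_dvd_nat (Nat.odd_iff.2 (by omega)) hq1dvd
  have hn1 := nine_le_of_odd_of_not_prime ho1 hc1.1 hc1.2
  obtain ⟨m, rfl⟩ : ∃ m, n2 = n1 + 2 * m := by
    rw [Nat.odd_iff] at ho1 ho2
    exact ⟨(n2 - n1) / 2, by omega⟩
  have hlt : ∀ k, 9 ≤ k → q1 ^ 2 < p ^ k := fun k hk ↦
    calc q1 ^ 2 < p ^ 2 := Nat.pow_lt_pow_left hqp two_ne_zero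
      _ ≤ p ^ k := Nat.pow_le_pow_right hp.pos (by omega)
  have hneg : ∀ k, 9 ≤ k → (q1 : ℂ) ^ 2 - (p : ℂ) ^ k = -((p ^ k - q1 ^ 2 : ℕ) : ℂ) := by
    intro k hk
    rw [Nat.cast_sub (hlt k hk).le]
    push_cast
    ring
  rw [hneg _ hn1] at hz1
  rw [hneg _ (by omega)] at hz2
  exact not_exists_of_lt hp hmod hp128 hw hqo hqp hq1nw hn1 ho1 (by omega) <|
    isSquare_mul_of_adjoin_eq (Nat.sub_pos_of_lt (hlt _ hn1))
      (Nat.sub_pos_of_lt (hlt _ (by omega))) hz1 hz2 heq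
end
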